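/- Let m and d be integers with 0 ≤ m ≤ d−1, let p be a prime, and for each 0 ≤ ℓ ≤ m let r_ℓ = p^{e_ℓ} be a power of p with integer e_ℓ ≥ 0. Set N_ℓ = (r_ℓ−1)(d+2−m) and k_ℓ = ⌈((r_ℓ−1)/r_ℓ)·d⌉. Assume that p(d−m) is even, or m = 0. Then for every collection of continuous maps f_0: Δ_{N_0} → ℝ^d, …, f_m: Δ_{N_m} → ℝ^d there exist an m-dimensional affine subspace L of ℝ^d and, for each 0 ≤ ℓ ≤ m, r_ℓ pairwise disjoint faces σ_1^ℓ, …, σ_{r_ℓ}^ℓ in the k_ℓ-skeleton of Δ_{N_ℓ} such that f_ℓ(σ_j^ℓ) ∩ L ≠ ∅ for all 1 ≤ j ≤ r_ℓ. (The topological generalized transversal Van Kampen–Flores theorem.) -/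

import Mathlib

/-!
The theorem is a statement about common zeros of equivariant functions (configuration space / test
map scheme), and the zeros are forced by a nonvanishing Euler class modulo `p`, computed here with
explicit cochains.

**Configurations.** Let `X` be the product over `j` of joins of `M j + 1` copies of `ℤ/p`, with the
free coordinatewise action of `(ℤ/p)^ι`. There are `e ℓ` factors for the `ℓ`-th map and `s` further
ones. A point of `X` determines, for every `ℓ` and every `g` in `(ℤ/p)^{e ℓ}`, an unnormalized point
in the cone over the simplex of dimension `N ℓ` (`blockPoint`), and these `p ^ e ℓ` points have
disjoint supports. It also determines `s` nonzero normal vectors (`direction`), complex for odd `p`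
and real for `p = 2`; over the reals they account for `d - m` directions, which for odd `p` is where
the parity hypothesis enters. If the parity fails, then `m = 0`, and the `d` coordinates of the map
are added to the functions required to be constant.

**Equations** (`Equation`). The nontrivial Fourier coefficients in `g` of the total mass of the
points, of the elementary symmetric function of degree `k ℓ + 2` of their coordinates, and of the
products of their images with the normal vectors have to vanish, so that none of these depends on
`g`. The averages over `g` of the last ones have to agree for all `ℓ`, and the normal vectors have
to be orthogonal. Common masses allow one to normalize. If the common value of the symmetric
function were not zero, then every point would have at least `k ℓ + 2` vertices in its support, more
in total than the simplex has; so all supports have at most `k ℓ + 1` vertices. Finally, the affine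
subspace orthogonal to the normal vectors through one of the image points meets all of them.

**Existence of a zero** (`exists_common_zero`). Each function `f k` in the system is multiplied by a
character `α k` of the group. If there were no common zero, the sectors of the plane in which the
values `f k` lie would give, on every tuple of points of small diameter, at least one function whose
pulled back Bockstein cocycle vanishes there. Hence the product of these cocycles vanishes on fine
subdivisions of `X`. On the other hand every one of them is equivariantly cohomologous to the
combination with coefficients `α k j` of the Bockstein cocycles of the coordinates `j`; the product
of these combinations, evaluated on a chain of `X` that kills coboundaries of invariant cochains
(`fundamentalChain`), is a sum over the ways to pick one coordinate per equation (`choiceSum`). The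
characters are triangular, and the number of equations with leading coordinate `j` fits `M j`, so
only the choice of all the leading coordinates contributes, and the value is a product of nonzero
leading coefficients. Barycentric subdivision does not change the value, a contradiction.
-/

open scoped BigOperators

noncomputable section


/-- The standard `N`-dimensional simplex, realized in Euclidean space `ℝ^{N+1}`. -/
def stdSimp (N : ℕ) : Set (EuclideanSpace ℝ (Fin (N + 1))) :=
  {x | (∀ i, 0 ≤ x i) ∧ ∑ i, x i = 1}

/-- The face of the standard simplex spanned by the vertex set `S`. -/
def simpFace (N : ℕ) (S : Finset (Fin (N + 1))) : Set (EuclideanSpace ℝ (Fin (N + 1))) :=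
  {x ∈ stdSimp N | ∀ i, x i ≠ 0 → i ∈ S}

namespace VanKampenFlores

/-! ### Ordered cochains -/

section Cochains

variable {X Y R K : Type*} [CommRing R]

/-- Cochains on ordered tuples with values in `R`. A tuple is a list, a list of length `n + 1` is a
simplex of dimension `n`, and the empty list carries the augmentation. A cochain has components in
all degrees; lists may have repeated entries. -/
abbrev Cochain (X R : Type*) := List X → R

/-- The simplicial coboundary of an ordered cochain. -/
def coboundary : Cochain X R →ₗ[R] Cochain X R where
  toFun Q l := ∑ i ∈ Finset.range l.length, (-1) ^ i * Q (l.eraseIdx i)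
  map_add' Q Q' := by
    ext l
    simp [mul_add, Finset.sum_add_distrib]
  map_smul' a Q := by
    ext l
    simp [Finset.mul_sum, mul_left_comm]

lemma coboundary_apply (Q : Cochain X R) (l : List X) :
    coboundary Q l = ∑ i ∈ Finset.range l.length, (-1) ^ i * Q (l.eraseIdx i) := rfl

/-- The restriction of a cochain to the simplices with first vertex `y`, as a cochain on the
opposite faces. -/
def link (y : X) : Cochain X R →ₗ[R] Cochain X R := LinearMap.funLeft R R fun l => y :: l

@[simp] lemma link_apply (y : X) (Q : Cochain X R) (l : List X) : link y Q l = Q (y :: l) := rfl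

@[simp] lemma coboundary_nil (Q : Cochain X R) : coboundary Q [] = 0 := by
  simp [coboundary_apply]

lemma coboundary_cons (Q : Cochain X R) (y : X) (l : List X) :
    coboundary Q (y :: l) = Q l - coboundary (link y Q) l := by
  simp [coboundary_apply, Finset.sum_range_succ', pow_succ', neg_add_eq_sub]

lemma link_coboundary (y : X) (Q : Cochain X R) :
    link y (coboundary Q) = Q - coboundary (link y Q) :=
  funext fun l => coboundary_cons Q y l

lemma coboundary_congr {Q Q' : Cochain X R} {l : List X}
    (h : ∀ l', l'.Sublist l → l'.length + 1 = l.length → Q l' = Q' l') :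
    coboundary Q l = coboundary Q' l := by
  simp only [coboundary_apply]
  refine Finset.sum_congr rfl fun i hi => ?_
  rw [h _ (List.eraseIdx_sublist ..)
    (List.length_eraseIdx_add_one (Finset.mem_range.1 hi))]

lemma coboundary_eq_zero {Q : Cochain X R} {l : List X}
    (h : ∀ l', l'.Sublist l → l'.length + 1 = l.length → Q l' = 0) : coboundary Q l = 0 := by
  rw [coboundary_congr (Q' := 0) h, map_zero, Pi.zero_apply]

@[simp] lemma coboundary_coboundary (Q : Cochain X R) : coboundary (coboundary Q) = 0 := by
  ext l
  induction l generalizing Q with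
  | nil => simp
  | cons y l ih => rw [coboundary_cons, link_coboundary, map_sub, Pi.sub_apply, ih]; simp

lemma coboundary_comp_map (g : X → Y) (Q : Cochain Y R) (l : List X) :
    coboundary (fun l => Q (l.map g)) l = coboundary Q (l.map g) := by
  simp [coboundary_apply, List.eraseIdx_map]

/-- The Alexander–Whitney cup product of the degree `n` component of the first cochain with the
second cochain. -/
def cup (n : ℕ) : Cochain X R →ₗ[R] Cochain X R →ₗ[R] Cochain X R :=
  LinearMap.mk₂ R
    (fun e c l => if n < l.length then e (l.take (n + 1)) * c (l.drop n) else 0)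
    (fun e e' c => by ext l; simp [add_mul, ite_add_ite])
    (fun a e c => by ext l; simp [mul_assoc])
    (fun e c c' => by ext l; simp [mul_add, ite_add_ite])
    (fun a e c => by ext l; simp [mul_left_comm])

lemma cup_apply (n : ℕ) (e c : Cochain X R) (l : List X) :
    cup n e c l = if n < l.length then e (l.take (n + 1)) * c (l.drop n) else 0 := rfl

@[simp] lemma cup_nil (n : ℕ) (e c : Cochain X R) : cup n e c [] = 0 := by simp [cup_apply]

lemma cup_zero_cons (e c : Cochain X R) (y : X) (l : List X) :
    cup 0 e c (y :: l) = e [y] * c (y :: l) := by simp [cup_apply]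

lemma link_cup_succ (n : ℕ) (e c : Cochain X R) (y : X) :
    link y (cup (n + 1) e c) = cup n (link y e) c := by
  ext l
  simp [cup_apply]

lemma cup_succ_cons (n : ℕ) (e c : Cochain X R) (y : X) (l : List X) :
    cup (n + 1) e c (y :: l) = cup n (link y e) c l :=
  congrFun (link_cup_succ n e c y) l

lemma cup_map {n : ℕ} {e c : Cochain Y R} {e' c' : Cochain X R} {A : X → Y} {l : List X}
    (he : ∀ l', l'.Sublist l → e (l'.map A) = e' l')
    (hc : ∀ l', l'.Sublist l → c (l'.map A) = c' l') :
    cup n e c (l.map A) = cup n e' c' l := by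
  simp only [cup_apply, List.length_map, ← List.map_take, ← List.map_drop,
    he _ (List.take_sublist ..), hc _ (List.drop_sublist ..)]

lemma cup_eq_zero_left {n : ℕ} {e : Cochain X R} {l : List X} (c : Cochain X R)
    (he : ∀ l', l'.Sublist l → e l' = 0) : cup n e c l = 0 := by
  simp [cup_apply, he _ (List.take_sublist ..)]

lemma cup_eq_zero_right {n : ℕ} {c : Cochain X R} {l : List X} (e : Cochain X R)
    (hc : ∀ l', l'.Sublist l → c l' = 0) : cup n e c l = 0 := by
  simp [cup_apply, hc _ (List.drop_sublist ..)]

lemma coboundary_cup (n : ℕ) (e : Cochain X R) {c : Cochain X R} (hc : c [] = 0) :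
    coboundary (cup n e c) =
      cup (n + 1) (coboundary e) c + (-1 : R) ^ n • cup n e (coboundary c) := by
  ext l
  simp only [Pi.add_apply, Pi.smul_apply]
  induction n generalizing e l with
  | zero =>
    rcases l with _ | ⟨y, l⟩
    · simp
    have hlink : link y (cup 0 e c) = e [y] • link y c := by ext; simp [cup_zero_cons]
    rw [coboundary_cons, cup_succ_cons, cup_zero_cons, link_coboundary, hlink, coboundary_cons]
    rcases l with _ | ⟨y', l⟩
    · simp [hc]
    · simp [cup_zero_cons, coboundary_cons]
      ring
  | succ n ih =>
    rcases l with _ | ⟨y, l⟩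
    · simp
    rw [coboundary_cons, cup_succ_cons, cup_succ_cons, link_cup_succ, ih, link_coboundary]
    simp [pow_succ]
    ring

/-- The unit of the cup product: the constant `1` in degree `0`. -/
def unitCochain : Cochain X R := fun l => if l.length = 1 then 1 else 0

lemma unitCochain_map (A : X → Y) (l : List X) :
    unitCochain (l.map A) = (unitCochain l : R) := by
  simp [unitCochain]

lemma coboundary_unitCochain : coboundary (unitCochain : Cochain X R) = 0 := by
  ext l
  rcases l with _ | ⟨a, _ | ⟨b, _ | ⟨c, l⟩⟩⟩
  · simp
  · simp [coboundary_cons, unitCochain]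
  · simp [coboundary_cons, unitCochain]
  · exact coboundary_eq_zero fun l' _ hlen => if_neg (by simp at hlen; omega)

/-- The iterated cup product of the cochains `e k` of degree `D`, over a list of indices. -/
def cupProd (D : ℕ) (e : K → Cochain X R) : List K → Cochain X R
  | [] => unitCochain
  | k :: ks => cup D (e k) (cupProd D e ks)

@[simp] lemma cupProd_apply_nil (D : ℕ) (e : K → Cochain X R) (ks : List K) :
    cupProd D e ks [] = 0 := by
  cases ks <;> simp [cupProd, unitCochain]

lemma coboundary_cupProd (D : ℕ) {e : K → Cochain X R} (he : ∀ k, coboundary (e k) = 0)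
    (ks : List K) : coboundary (cupProd D e ks) = 0 := by
  induction ks with
  | nil => exact coboundary_unitCochain
  | cons k ks ih => rw [cupProd, coboundary_cup _ _ (by simp), he, ih]; simp

lemma cupProd_map {D : ℕ} {e : K → Cochain Y R} {e' : K → Cochain X R} {A : X → Y} (ks : List K)
    {l : List X} (he : ∀ k l', l'.Sublist l → e k (l'.map A) = e' k l') :
    cupProd D e ks (l.map A) = cupProd D e' ks l := by
  induction ks generalizing l with
  | nil => exact unitCochain_map A l
  | cons k ks ih => exact cup_map (he k) fun l' hl' => ih fun k l'' h => he k l'' (h.trans hl')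

lemma cupProd_eq_zero (D : ℕ) {e : K → Cochain X R} {ks : List K} {k : K} (hk : k ∈ ks)
    {l : List X} (he : ∀ l', l'.Sublist l → e k l' = 0) : cupProd D e ks l = 0 := by
  induction ks generalizing l with
  | nil => simp at hk
  | cons k' ks ih =>
    rcases List.mem_cons.1 hk with rfl | hk
    · exact cup_eq_zero_left _ he
    · exact cup_eq_zero_right _ fun l' hl' => ih hk fun l'' h => he l'' (h.trans hl')

lemma cupProd_mem {S : Submodule R (Cochain X R)} (hunit : unitCochain ∈ S)
    (hcup : ∀ n, ∀ a ∈ S, ∀ c ∈ S, cup n a c ∈ S) (D : ℕ) {e : K → Cochain X R}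
    (he : ∀ k, e k ∈ S) (ks : List K) : cupProd D e ks ∈ S := by
  induction ks with
  | nil => exact hunit
  | cons k ks ih => exact hcup _ _ (he k) _ ih

lemma exists_cupProd_sub_eq_coboundary {S : Submodule R (Cochain X R)} (hunit : unitCochain ∈ S)
    (hcup : ∀ n, ∀ a ∈ S, ∀ c ∈ S, cup n a c ∈ S) (D : ℕ) {e e' b : K → Cochain X R}
    (hcocycle : ∀ k, coboundary (e k) = 0) (hb : ∀ k, e k - e' k = coboundary (b k))
    (he : ∀ k, e k ∈ S) (he' : ∀ k, e' k ∈ S) (hbS : ∀ k, b k ∈ S) (ks : List K) :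
    ∃ Q ∈ S, Q [] = 0 ∧ cupProd (D + 1) e ks - cupProd (D + 1) e' ks = coboundary Q := by
  have hcocycle' : ∀ k, coboundary (e' k) = 0 := fun k => by
    rw [← sub_sub_cancel (e k) (e' k), hb, map_sub, hcocycle, coboundary_coboundary, sub_zero]
  induction ks with
  | nil => exact ⟨0, S.zero_mem, rfl, by simp [cupProd]⟩
  | cons k ks ih =>
    obtain ⟨Q, hQS, hQnil, hQ⟩ := ih
    have hsign : (-1 : R) ^ (D + 1) * (-1) ^ (D + 1) = 1 := by simp [← mul_pow]
    refine ⟨(-1 : R) ^ (D + 1) • cup (D + 1) (e k) Q + cup D (b k) (cupProd (D + 1) e' ks),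
      S.add_mem (S.smul_mem _ (hcup _ _ (he k) _ hQS))
        (hcup _ _ (hbS k) _ (cupProd_mem hunit hcup _ he' ks)), by simp, ?_⟩
    rw [map_add, map_smul, coboundary_cup _ _ hQnil, coboundary_cup _ _ (by simp), hcocycle,
      coboundary_cupProd _ hcocycle', ← hb, ← hQ]
    simp [cupProd, smul_smul, hsign]

end Cochains

/-! ### Barycentric subdivision of affine simplices -/

section Subdivision

variable {R E F : Type*} [CommRing R] [AddCommGroup E] [Module ℝ E] [AddCommGroup F] [Module ℝ F]

/-- The barycenter of a list of points, counted with multiplicity; it is `0` for the empty list. -/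
def barycenter (l : List E) : E := (l.length : ℝ)⁻¹ • l.sum

lemma barycenter_mem {C : Set E} (hC : Convex ℝ C) {l : List E} (hne : l ≠ [])
    (hl : ∀ y ∈ l, y ∈ C) : barycenter l ∈ C := by
  rw [barycenter, ← Fin.sum_univ_getElem, Finset.smul_sum]
  exact hC.sum_mem (fun _ _ => by positivity) (by simp [hne]) fun i _ => hl _ (l.getElem_mem i.2)

lemma barycenter_map (A : E →ₗ[ℝ] F) (l : List E) : barycenter (l.map A) = A (barycenter l) := by
  simp [barycenter, map_list_sum]

/-- `subdivideAux n` is the dual of barycentric subdivision on simplices with `n` vertices: the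
subdivision of a simplex is the cone from its barycenter over the subdivision of its boundary. -/
def subdivideAux : ℕ → Cochain E R →ₗ[R] Cochain E R
  | 0 => LinearMap.pi fun _ => LinearMap.proj []
  | n + 1 => LinearMap.pi fun l =>
      LinearMap.proj l ∘ₗ coboundary ∘ₗ subdivideAux n ∘ₗ link (barycenter l)

/-- The dual of barycentric subdivision of affine chains. -/
def subdivide : Cochain E R →ₗ[R] Cochain E R :=
  LinearMap.pi fun l => LinearMap.proj l ∘ₗ subdivideAux l.length

/-- `homotopyAux n` is the part of `subdivisionHomotopy` on simplices with `n` vertices. -/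
def homotopyAux : ℕ → Cochain E R →ₗ[R] Cochain E R
  | 0 => 0
  | n + 1 => LinearMap.pi fun l => LinearMap.proj (barycenter l :: l) -
      LinearMap.proj l ∘ₗ coboundary ∘ₗ homotopyAux n ∘ₗ link (barycenter l)

/-- The dual of the chain homotopy between barycentric subdivision and the identity. -/
def subdivisionHomotopy : Cochain E R →ₗ[R] Cochain E R :=
  LinearMap.pi fun l => LinearMap.proj l ∘ₗ homotopyAux l.length

@[simp] lemma subdivideAux_zero_apply (c : Cochain E R) (l : List E) :
    subdivideAux 0 c l = c [] := rfl

lemma subdivideAux_succ_apply (n : ℕ) (c : Cochain E R) (l : List E) :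
    subdivideAux (n + 1) c l = coboundary (subdivideAux n (link (barycenter l) c)) l := rfl

lemma subdivide_apply (c : Cochain E R) (l : List E) :
    subdivide c l = subdivideAux l.length c l := rfl

@[simp] lemma homotopyAux_zero_apply (c : Cochain E R) (l : List E) : homotopyAux 0 c l = 0 := rfl

lemma homotopyAux_succ_apply (n : ℕ) (c : Cochain E R) (l : List E) :
    homotopyAux (n + 1) c l =
      c (barycenter l :: l) - coboundary (homotopyAux n (link (barycenter l) c)) l := rfl

lemma subdivisionHomotopy_apply (c : Cochain E R) (l : List E) :
    subdivisionHomotopy c l = homotopyAux l.length c l := rfl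

lemma coboundary_subdivideAux {n : ℕ} (c : Cochain E R) {l : List E} (hl : l.length = n + 1) :
    coboundary (subdivideAux n c) l = subdivideAux (n + 1) (coboundary c) l := by
  induction n generalizing c l with
  | zero =>
    obtain ⟨a, rfl⟩ := List.length_eq_one_iff.1 hl
    simp [subdivideAux_succ_apply, coboundary_cons]
  | succ n ih =>
    have hzero : coboundary (subdivideAux (n + 1) (coboundary (link (barycenter l) c))) l = 0 := by
      rw [coboundary_congr (Q' := coboundary (subdivideAux n (link (barycenter l) c)))
        fun l' _ hlen => (ih _ (by omega)).symm, coboundary_coboundary, Pi.zero_apply]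
    rw [subdivideAux_succ_apply (n + 1), link_coboundary, map_sub, map_sub, Pi.sub_apply, hzero,
      sub_zero]

lemma coboundary_subdivide (c : Cochain E R) :
    coboundary (subdivide c) = subdivide (coboundary c) := by
  ext l
  rcases hl : l.length with _ | n
  · simp [List.length_eq_zero_iff.1 hl, subdivide_apply]
  · rw [subdivide_apply, hl, ← coboundary_subdivideAux c hl]
    exact coboundary_congr fun l' _ hlen => by
      rw [subdivide_apply, show l'.length = n by omega]

lemma homotopyAux_coboundary {n : ℕ} (c : Cochain E R) {l : List E} (hl : l.length = n + 1) :
    homotopyAux (n + 1) (coboundary c) l =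
      c l - subdivideAux (n + 1) c l - coboundary (homotopyAux n c) l := by
  induction n generalizing c l with
  | zero =>
    obtain ⟨a, rfl⟩ := List.length_eq_one_iff.1 hl
    simp [homotopyAux_succ_apply, subdivideAux_succ_apply, coboundary_cons]
  | succ n ih =>
    set b := barycenter l with hb
    have hlink : coboundary (homotopyAux (n + 1) (coboundary (link b c))) l =
        coboundary (link b c) l - subdivideAux (n + 2) c l := by
      rw [coboundary_congr (Q' := link b c - subdivideAux (n + 1) (link b c) -
          coboundary (homotopyAux n (link b c))) fun l' _ hlen => ih _ (by omega), map_sub, map_sub,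
        coboundary_coboundary, sub_zero, Pi.sub_apply, ← subdivideAux_succ_apply]
    rw [homotopyAux_succ_apply, ← hb, link_coboundary, map_sub, map_sub, Pi.sub_apply, hlink,
      coboundary_cons]
    ring

lemma sub_subdivide (c : Cochain E R) :
    c - subdivide c = coboundary (subdivisionHomotopy c) + subdivisionHomotopy (coboundary c) := by
  ext l
  rw [Pi.add_apply, Pi.sub_apply, subdivide_apply, subdivisionHomotopy_apply]
  rcases hl : l.length with _ | n
  · simp [List.length_eq_zero_iff.1 hl]
  · rw [homotopyAux_coboundary c hl, coboundary_congr (Q' := homotopyAux n c) fun l' _ hlen => by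
      rw [subdivisionHomotopy_apply, show l'.length = n by omega]]
    ring

section Naturality

variable {A : E →ₗ[ℝ] F} {C : Set E} {c : Cochain F R} {c' : Cochain E R}

lemma link_barycenter_map (hC : Convex ℝ C)
    (h : ∀ l, (∀ y ∈ l, y ∈ C) → c (l.map A) = c' l) {l : List E} (hne : l ≠ [])
    (hl : ∀ y ∈ l, y ∈ C) {l' : List E} (hl' : ∀ y ∈ l', y ∈ C) :
    link (barycenter (l.map A)) c (l'.map A) = link (barycenter l) c' l' := by
  rw [link_apply, link_apply, barycenter_map, ← List.map_cons]
  exact h _ (List.forall_mem_cons.2 ⟨barycenter_mem hC hne hl, hl'⟩)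

lemma subdivideAux_map (hC : Convex ℝ C) (h : ∀ l, (∀ y ∈ l, y ∈ C) → c (l.map A) = c' l)
    (n : ℕ) {l : List E} (hl : ∀ y ∈ l, y ∈ C) :
    subdivideAux n c (l.map A) = subdivideAux n c' l := by
  induction n generalizing c c' l with
  | zero => exact h [] (by simp)
  | succ n ih =>
    rcases eq_or_ne l [] with rfl | hne
    · simp [subdivideAux_succ_apply]
    rw [subdivideAux_succ_apply, subdivideAux_succ_apply, ← coboundary_comp_map]
    exact coboundary_congr fun l' hl' _ => ih (fun _ => link_barycenter_map hC h hne hl)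
      fun y hy => hl y (hl'.subset hy)

lemma homotopyAux_map (hC : Convex ℝ C) (h : ∀ l, (∀ y ∈ l, y ∈ C) → c (l.map A) = c' l)
    {n : ℕ} {l : List E} (hl : ∀ y ∈ l, y ∈ C) (hn : l.length = n) :
    homotopyAux n c (l.map A) = homotopyAux n c' l := by
  induction n generalizing c c' l with
  | zero => rfl
  | succ n ih =>
    have hne : l ≠ [] := by rintro rfl; simp at hn
    rw [homotopyAux_succ_apply, homotopyAux_succ_apply, ← coboundary_comp_map]
    congr 1
    · exact link_barycenter_map hC h hne hl hl
    · exact coboundary_congr fun l' hl' hlen => ih (fun _ => link_barycenter_map hC h hne hl)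
        (fun y hy => hl y (hl'.subset hy)) (by omega)

end Naturality

variable {S : Type*} (R) in
/-- The cochains that are invariant under a family of linear maps, as far as the simplices
contained in one of the given cells are concerned. -/
def invariantCochains (act : S → E →ₗ[ℝ] E) (cells : Set (Set E)) :
    Submodule R (Cochain E R) where
  carrier := {c | ∀ s, ∀ C ∈ cells, ∀ l, (∀ y ∈ l, y ∈ C) → c (l.map (act s)) = c l}
  add_mem' ha hc s C hC l hl := by simp only [Pi.add_apply, ha s C hC l hl, hc s C hC l hl]
  zero_mem' _ _ _ _ _ := rfl
  smul_mem' a c hc s C hC l hl := by simp only [Pi.smul_apply, hc s C hC l hl]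

section Invariant

variable {S : Type*} {act : S → E →ₗ[ℝ] E} {cells : Set (Set E)}

lemma subdivide_mem_invariantCochains (hconv : ∀ C ∈ cells, Convex ℝ C) {c : Cochain E R}
    (hc : c ∈ invariantCochains R act cells) : subdivide c ∈ invariantCochains R act cells := by
  intro s C hC l hl
  rw [subdivide_apply, subdivide_apply, List.length_map]
  exact subdivideAux_map (hconv C hC) (hc s C hC) _ hl

lemma subdivisionHomotopy_mem_invariantCochains (hconv : ∀ C ∈ cells, Convex ℝ C)
    {c : Cochain E R} (hc : c ∈ invariantCochains R act cells) :
    subdivisionHomotopy c ∈ invariantCochains R act cells := by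
  intro s C hC l hl
  rw [subdivisionHomotopy_apply, subdivisionHomotopy_apply, List.length_map]
  exact homotopyAux_map (hconv C hC) (hc s C hC) hl rfl

lemma unitCochain_mem_invariantCochains : unitCochain ∈ invariantCochains R act cells :=
  fun s _ _ l _ => unitCochain_map (act s) l

lemma cup_mem_invariantCochains (n : ℕ) {a c : Cochain E R}
    (ha : a ∈ invariantCochains R act cells) (hc : c ∈ invariantCochains R act cells) :
    cup n a c ∈ invariantCochains R act cells := fun s C hC _ hl =>
  cup_map (fun l' hl' => ha s C hC l' fun y hy => hl y (hl'.subset hy))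
    fun l' hl' => hc s C hC l' fun y hy => hl y (hl'.subset hy)

lemma map_subdivide_iterate (hconv : ∀ C ∈ cells, Convex ℝ C) {z : Cochain E R →ₗ[R] R}
    (hz : ∀ Q ∈ invariantCochains R act cells, z (coboundary Q) = 0) (N : ℕ) {c : Cochain E R}
    (hcocycle : coboundary c = 0) (hc : c ∈ invariantCochains R act cells) :
    z (subdivide^[N] c) = z c := by
  induction N generalizing c with
  | zero => rfl
  | succ N ih =>
    rw [Function.iterate_succ_apply, ih (by rw [coboundary_subdivide, hcocycle, map_zero])
      (subdivide_mem_invariantCochains hconv hc), eq_comm, ← sub_eq_zero, ← map_sub,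
      sub_subdivide, hcocycle, map_zero, add_zero]
    exact hz _ (subdivisionHomotopy_mem_invariantCochains hconv hc)

end Invariant

end Subdivision

section Diameter

variable {R M E : Type*} [CommRing R] [PseudoMetricSpace M] [SeminormedAddCommGroup E]
  [NormedSpace ℝ E]

/-- The pairwise distances of the points of a list are at most `r`. -/
def DiamLE (r : ℝ) (l : List M) : Prop := ∀ x ∈ l, ∀ y ∈ l, dist x y ≤ r

lemma DiamLE.sublist {r : ℝ} {l l' : List M} (h : DiamLE r l) (hl' : l'.Sublist l) :
    DiamLE r l' := fun x hx y hy => h x (hl'.subset hx) y (hl'.subset hy)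

lemma DiamLE.cons {r : ℝ} {b : M} {l : List M} (hr : 0 ≤ r) (hb : ∀ x ∈ l, dist x b ≤ r)
    (h : DiamLE r l) : DiamLE r (b :: l) := by
  intro x hx y hy
  rcases List.mem_cons.1 hx with rfl | hx' <;> rcases List.mem_cons.1 hy with rfl | hy'
  · simpa using hr
  · rw [dist_comm]; exact hb y hy'
  · exact hb x hx'
  · exact h x hx' y hy'

lemma barycenter_sub {l : List E} (hne : l ≠ []) (v : E) :
    barycenter l - v = (l.length : ℝ)⁻¹ • ∑ i : Fin l.length, (l[i] - v) := by
  have hlen : (l.length : ℝ) ≠ 0 := by simp [hne]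
  simp [barycenter, Finset.sum_sub_distrib, smul_sub, ← Nat.cast_smul_eq_nsmul ℝ, smul_smul, hlen]

/-- One of the differences whose average is `barycenter l - v` vanishes. -/
lemma dist_barycenter_le {r : ℝ} {n : ℕ} {l : List E} (hl : l.length = n + 1) (hr : DiamLE r l)
    {v : E} (hv : v ∈ l) : dist v (barycenter l) ≤ n / (n + 1) * r := by
  obtain ⟨i, rfl⟩ := List.mem_iff_get.1 hv
  have hsum : ‖∑ k : Fin l.length, (l[k] - l[i])‖ ≤ n * r := by
    rw [← Finset.add_sum_erase _ _ (Finset.mem_univ i), sub_self, zero_add]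
    refine (norm_sum_le_of_le _ (n := fun _ => r) fun k _ => ?_).trans ?_
    · rw [← dist_eq_norm]
      exact hr _ (l.getElem_mem k.2) _ (l.getElem_mem i.2)
    · simp [hl]
  calc dist (l.get i) (barycenter l) = ‖barycenter l - l[i]‖ := by
        rw [dist_comm, dist_eq_norm]; rfl
    _ = ((n : ℝ) + 1)⁻¹ * ‖∑ k : Fin l.length, (l[k] - l[i])‖ := by
        rw [barycenter_sub (by rintro rfl; simp at hl), norm_smul]
        simp [hl, abs_of_pos (show (0 : ℝ) < n + 1 by positivity)]
    _ ≤ ((n : ℝ) + 1)⁻¹ * (n * r) := by gcongr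
    _ = n / (n + 1) * r := by ring

lemma convexHull_subset_closedBall_barycenter {r : ℝ} {n : ℕ} {l : List E}
    (hl : l.length = n + 1) (hr : DiamLE r l) :
    convexHull ℝ {y | y ∈ l} ⊆ Metric.closedBall (barycenter l) (n / (n + 1) * r) :=
  convexHull_min (fun _ => dist_barycenter_le hl hr) (convex_closedBall _ _)

lemma sub_one_div_self_le_div_add_one (n : ℕ) : ((n : ℝ) - 1) / n ≤ n / (n + 1) := by
  rcases n.eq_zero_or_pos with rfl | hpos
  · simp
  · rw [div_le_div_iff₀ (by positivity) (by positivity)]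
    nlinarith

/-- The simplices in the subdivision of a simplex with `n` vertices and diameter `r` have diameter
at most `(n - 1) / n * r`. -/
lemma subdivideAux_eq_zero {n : ℕ} {C : Set E} (hC : Convex ℝ C) {r : ℝ} (hr : 0 ≤ r)
    {c : Cochain E R}
    (hc : ∀ l, (∀ y ∈ l, y ∈ C) → l.length = n → DiamLE ((n - 1) / n * r) l → c l = 0)
    {l : List E} (hl : ∀ y ∈ l, y ∈ C) (hn : l.length = n) (hs : DiamLE r l) :
    subdivideAux n c l = 0 := by
  induction n generalizing C c l with
  | zero => exact hc [] (by simp) rfl (by simp [DiamLE])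
  | succ n ih =>
    have hne : l ≠ [] := by rintro rfl; simp at hn
    have hmem : ∀ y ∈ l, y ∈ convexHull ℝ {y | y ∈ l} := fun y hy => subset_convexHull ℝ _ hy
    have hsub : convexHull ℝ {y | y ∈ l} ⊆ C := convexHull_min hl hC
    refine coboundary_eq_zero fun l' hl' hlen =>
      ih (convex_convexHull ℝ {y | y ∈ l}) (fun l'' hl'' hn'' hs'' => ?_)
        (fun y hy => hmem y (hl'.subset hy)) (by omega) (hs.sublist hl')
    refine hc _ (List.forall_mem_cons.2 ⟨barycenter_mem hC hne hl, fun y hy => hsub (hl'' y hy)⟩)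
      (by simp [hn'']) ?_
    rw [Nat.cast_add_one, add_sub_cancel_right]
    refine DiamLE.cons (by positivity)
      (fun y hy => convexHull_subset_closedBall_barycenter hn hs (hl'' y hy))
      fun x hx y hy => (hs'' x hx y hy).trans ?_
    exact mul_le_mul_of_nonneg_right (sub_one_div_self_le_div_add_one n) hr

lemma subdivide_iterate_eq_zero {C : Set E} (hC : Convex ℝ C) {r : ℝ} (hr : 0 ≤ r) {n : ℕ}
    (N : ℕ) {c : Cochain E R}
    (hc : ∀ l, (∀ y ∈ l, y ∈ C) → l.length = n + 1 → DiamLE ((n / (n + 1)) ^ N * r) l → c l = 0)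
    {l : List E} (hl : ∀ y ∈ l, y ∈ C) (hn : l.length = n + 1) (hs : DiamLE r l) :
    (subdivide^[N] c) l = 0 := by
  induction N generalizing c with
  | zero => exact hc l hl hn (by simpa using hs)
  | succ N ih =>
    rw [Function.iterate_succ_apply]
    refine ih fun l' hl' hn' hs' => ?_
    rw [subdivide_apply, hn']
    refine subdivideAux_eq_zero hC (by positivity) (fun l'' hl'' hn'' hs'' => ?_) hl' hn' hs'
    refine hc l'' hl'' hn'' ?_
    rwa [Nat.cast_add_one, add_sub_cancel_right, ← mul_assoc, ← pow_succ'] at hs''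

end Diameter

/-! ### The fundamental chain of a product of joins -/

section Staircase

variable {G ι R : Type*} [AddCommGroup G] [LinearOrder ι] [CommRing R]

/-- A vertex of the staircase triangulation of a product of joins `G * ⋯ * G`, one join for each
index in `ι`: a position in the grid and a group element in each coordinate. The positions are not
bounded here; the number of factors of each join enters through `IsStep`. -/
abbrev GridVertex (G ι : Type*) := (ι → ℕ) × (ι → G)

/-- The vertex one position further in direction `j`, with `g` added to the `j`-th group element. -/
def step (x : GridVertex G ι) (j : ι) (g : G) : GridVertex G ι :=
  (Function.update x.1 j (x.1 j + 1), Function.update x.2 j (x.2 j + g))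

/-- The relation between consecutive vertices of a staircase path in the product of joins whose
`j`-th join has `M j + 1` factors. -/
def IsStep (M : ι → ℕ) (x y : GridVertex G ι) : Prop := ∃ j g, x.1 j < M j ∧ y = step x j g

/-- Translation of the group elements of a vertex. -/
def translate (s : ι → G) (x : GridVertex G ι) : GridVertex G ι := (x.1, x.2 + s)

lemma step_translate (s : ι → G) (x : GridVertex G ι) (j : ι) (g : G) :
    step (translate s x) j g = translate s (step x j g) := by
  refine Prod.ext rfl (funext fun k => ?_)
  obtain rfl | h := eq_or_ne k j
  · simp [step, translate, add_right_comm]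
  · simp [step, translate, h]

lemma step_step_self (x : GridVertex G ι) (j : ι) (g g' : G) :
    step (step x j g) j g' = step (step x j (g + g')) j 0 := by
  simp [step, add_assoc]

lemma step_comm (x : GridVertex G ι) {j j' : ι} (h : j ≠ j') (g g' : G) :
    step (step x j' g') j g = step (step x j g) j' g' := by
  simp [step, Function.update_of_ne h, Function.update_of_ne h.symm, Function.update_comm h]

variable [Fintype ι]

/-- The shuffle sign of a step in direction `j` from position `i`. The differences are truncated;
only positions with `i ≤ M` matter. -/
def shuffleSign (R : Type*) [CommRing R] (M i : ι → ℕ) (j : ι) : R :=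
  (-1) ^ ∑ j' with j' < j, (M j' - i j')

lemma shuffleSign_update {M i : ι → ℕ} {j : ι} (j' : ι) (hj : i j < M j) :
    shuffleSign R M (Function.update i j (i j + 1)) j' =
      if j < j' then -shuffleSign R M i j' else shuffleSign R M i j' := by
  have h : ∑ k with k < j', (M k - i k) =
      ∑ k with k < j', (M k - Function.update i j (i j + 1) k) + if j < j' then 1 else 0 := by
    have hj' : (if j < j' then 1 else 0) = ∑ k with k < j', if k = j then 1 else 0 := by
      simp [Finset.sum_ite_eq']
    rw [hj', ← Finset.sum_add_distrib]
    refine Finset.sum_congr rfl fun k _ => ?_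
    obtain rfl | hk := eq_or_ne k j
    · simp only [Function.update_self, if_true]
      omega
    · simp [hk]
  unfold shuffleSign
  rw [h]
  split_ifs <;> simp [pow_succ]

variable [Fintype G]

/-- The signed sum of the values of a function after one step in direction `j`. A step that leaves
position `q` and adds `g` has weight `ω q g`. -/
def directionSum (M : ι → ℕ) (ω : ℕ → G → R) (j : ι) :
    (GridVertex G ι → R) →ₗ[R] (GridVertex G ι → R) where
  toFun F x := if x.1 j < M j then
    shuffleSign R M x.1 j * ∑ g, ω (x.1 j) g * F (step x j g) else 0
  map_add' F F' := by
    ext x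
    simp [mul_add, Finset.sum_add_distrib, ite_add_ite]
  map_smul' a F := by
    ext x
    simp [Finset.mul_sum, mul_left_comm]

variable {M : ι → ℕ} {ω : ℕ → G → R}

lemma directionSum_apply (j : ι) (F : GridVertex G ι → R) (x : GridVertex G ι) :
    directionSum M ω j F x = if x.1 j < M j then
      shuffleSign R M x.1 j * ∑ g, ω (x.1 j) g * F (step x j g) else 0 := rfl

lemma directionSum_congr {j : ι} {F F' : GridVertex G ι → R} {x : GridVertex G ι}
    (h : x.1 j < M j → ∀ g, F (step x j g) = F' (step x j g)) :
    directionSum M ω j F x = directionSum M ω j F' x := by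
  rw [directionSum_apply, directionSum_apply]
  split_ifs with hj
  · simp only [h hj]
  · rfl

lemma directionSum_eq_zero (hω : ∀ q, ∑ g, ω q g = 0) {j : ι} {F : GridVertex G ι → R}
    {x : GridVertex G ι} (hF : x.1 j < M j → ∀ g, F (step x j g) = F (step x j 0)) :
    directionSum M ω j F x = 0 := by
  rw [directionSum_apply]
  split_ifs with hj
  · simp only [hF hj, ← Finset.sum_mul, hω, zero_mul, mul_zero]
  · rfl

lemma directionSum_directionSum_self (hωω : ∀ q h, ∑ g, ω q g * ω (q + 1) (h - g) = 0) (j : ι)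
    (F : GridVertex G ι → R) : directionSum M ω j (directionSum M ω j F) = 0 := by
  ext x
  have hconv : ∑ g, ω (x.1 j) g * ∑ g', ω (x.1 j + 1) g' * F (step (step x j g) j g') = 0 := by
    calc
      _ = ∑ g, ∑ h, ω (x.1 j) g * (ω (x.1 j + 1) (h - g) * F (step (step x j h) j 0)) := by
        refine Finset.sum_congr rfl fun g _ => ?_
        rw [Finset.mul_sum, ← Equiv.sum_comp (Equiv.subRight g)]
        simp [step_step_self x j g]
      _ = ∑ h, (∑ g, ω (x.1 j) g * ω (x.1 j + 1) (h - g)) * F (step (step x j h) j 0) := by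
        rw [Finset.sum_comm]
        simp only [Finset.sum_mul, mul_assoc]
      _ = 0 := by simp [hωω]
  have hpos (g : G) : (step x j g).1 = Function.update x.1 j (x.1 j + 1) := rfl
  simp only [directionSum_apply, hpos, Function.update_self, Pi.zero_apply]
  split_ifs with hj hj'
  · simp only [mul_left_comm (ω _ _), ← Finset.mul_sum, hconv, mul_zero]
  · simp
  · rfl

lemma directionSum_anticomm {j j' : ι} (h : j < j') (F : GridVertex G ι → R) :
    directionSum M ω j' (directionSum M ω j F) = -directionSum M ω j (directionSum M ω j' F) := by
  ext x
  have hpos (k : ι) (g : G) : (step x k g).1 = Function.update x.1 k (x.1 k + 1) := rfl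
  simp only [directionSum_apply, Pi.neg_apply, hpos, Function.update_of_ne h.ne,
    Function.update_of_ne h.ne']
  by_cases hj : x.1 j < M j
  swap
  · simp [hj]
  by_cases hj' : x.1 j' < M j'
  swap
  · simp [hj']
  simp only [hj, hj', if_true, shuffleSign_update _ hj, shuffleSign_update _ hj', h, h.not_gt,
    if_false, Finset.mul_sum, step_comm x h.ne]
  rw [Finset.sum_comm, ← Finset.sum_neg_distrib]
  refine Finset.sum_congr rfl fun g _ => ?_
  rw [← Finset.sum_neg_distrib]
  exact Finset.sum_congr rfl fun g' _ => by ring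

/-- The signed sum of the values of a function after one step in an arbitrary direction. -/
def stepSum (M : ι → ℕ) (ω : ℕ → G → R) : (GridVertex G ι → R) →ₗ[R] (GridVertex G ι → R) :=
  ∑ j, directionSum M ω j

lemma stepSum_apply (F : GridVertex G ι → R) (x : GridVertex G ι) :
    stepSum M ω F x = ∑ j, directionSum M ω j F x := by
  simp [stepSum]

lemma stepSum_eq_zero (hω : ∀ q, ∑ g, ω q g = 0) {F : GridVertex G ι → R} {x : GridVertex G ι}
    (hF : ∀ j, x.1 j < M j → ∀ g, F (step x j g) = F (step x j 0)) : stepSum M ω F x = 0 := by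
  rw [stepSum_apply]
  exact Finset.sum_eq_zero fun j _ => directionSum_eq_zero hω (hF j)

lemma stepSum_stepSum (hωω : ∀ q h, ∑ g, ω q g * ω (q + 1) (h - g) = 0) (F : GridVertex G ι → R) :
    stepSum M ω (stepSum M ω F) = 0 := by
  simp only [stepSum, LinearMap.sum_apply, map_sum]
  rw [← Finset.sum_product']
  refine Finset.sum_involution (fun a _ => a.swap) ?_ ?_ (by simp) (by simp)
  · rintro ⟨j, j'⟩ -
    obtain h | rfl | h := lt_trichotomy j j'
    · simp [directionSum_anticomm h]
    · simp [directionSum_directionSum_self hωω]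
    · simp [directionSum_anticomm h]
  · rintro ⟨j, j'⟩ - hne heq
    obtain rfl : j' = j := congrArg Prod.fst heq
    exact hne (directionSum_directionSum_self hωω _ F)

/-- Evaluation of a cochain on the weighted sum of all staircase paths with `n` steps from `x`. -/
def staircase (M : ι → ℕ) (ω : ℕ → G → R) :
    ℕ → GridVertex G ι → Cochain (GridVertex G ι) R →ₗ[R] R
  | 0, x => LinearMap.proj [x]
  | n + 1, x => LinearMap.proj x ∘ₗ stepSum M ω ∘ₗ
      LinearMap.pi fun y => staircase M ω n y ∘ₗ link x

@[simp] lemma staircase_zero (x : GridVertex G ι) (c : Cochain (GridVertex G ι) R) :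
    staircase M ω 0 x c = c [x] := rfl

lemma staircase_succ (n : ℕ) (x : GridVertex G ι) (c : Cochain (GridVertex G ι) R) :
    staircase M ω (n + 1) x c = stepSum M ω (fun y => staircase M ω n y (link x c)) x := rfl

lemma staircase_congr (n : ℕ) {x : GridVertex G ι} {c c' : Cochain (GridVertex G ι) R}
    (h : ∀ l, l.length = n → List.IsChain (IsStep M) (x :: l) → c (x :: l) = c' (x :: l)) :
    staircase M ω n x c = staircase M ω n x c' := by
  induction n generalizing x c c' with
  | zero => exact h [] rfl (by simp)
  | succ n ih =>
    simp only [staircase_succ, stepSum_apply]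
    refine Finset.sum_congr rfl fun j _ => directionSum_congr fun hj g => ih fun l hlen hl => ?_
    exact h _ (by simp [hlen]) (List.isChain_cons_cons.2 ⟨⟨j, g, hj, rfl⟩, hl⟩)

lemma staircase_translate (n : ℕ) (s : ι → G) (x : GridVertex G ι)
    (c : Cochain (GridVertex G ι) R) :
    staircase M ω n (translate s x) c = staircase M ω n x fun l => c (l.map (translate s)) := by
  induction n generalizing x c with
  | zero => rfl
  | succ n ih =>
    simp only [staircase_succ, stepSum_apply, directionSum_apply, step_translate, ih]
    rfl

-- The faces omitting an inner vertex cancel: they contribute `stepSum M ω (stepSum M ω _)`.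
lemma staircase_coboundary (hω : ∀ q, ∑ g, ω q g = 0)
    (hωω : ∀ q h, ∑ g, ω q g * ω (q + 1) (h - g) = 0) (n : ℕ) (x : GridVertex G ι)
    (Q : Cochain (GridVertex G ι) R) :
    staircase M ω (n + 1) x (coboundary Q) = stepSum M ω (fun y => staircase M ω n y Q) x := by
  have hlink (k : ℕ) (x : GridVertex G ι) (Q : Cochain (GridVertex G ι) R) :
      staircase M ω (k + 1) x (coboundary Q) = stepSum M ω (fun y => staircase M ω k y Q) x -
        stepSum M ω (fun y => staircase M ω k y (coboundary (link x Q))) x := by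
    simp only [staircase_succ k, link_coboundary, map_sub]
    exact congrFun (map_sub (stepSum M ω) (fun y => staircase M ω k y Q) _) x
  induction n generalizing x Q with
  | zero =>
    rw [hlink, sub_eq_self]
    exact stepSum_eq_zero hω fun j _ g => by simp [coboundary_cons]
  | succ n ih =>
    rw [hlink, sub_eq_self]
    simp only [ih]
    exact congrFun (stepSum_stepSum hωω _) x

lemma staircase_coboundary_eq_zero (hω : ∀ q, ∑ g, ω q g = 0)
    (hωω : ∀ q h, ∑ g, ω q g * ω (q + 1) (h - g) = 0) (n : ℕ) {x : GridVertex G ι}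
    {Q : Cochain (GridVertex G ι) R}
    (hQ : ∀ s l, List.IsChain (IsStep M) (x :: l) → Q (l.map (translate s)) = Q l) :
    staircase M ω (n + 1) x (coboundary Q) = 0 := by
  rw [staircase_coboundary hω hωω]
  refine stepSum_eq_zero hω fun j hj g => ?_
  have hstep : step x j g = translate (Pi.single j g) (step x j 0) := by
    refine Prod.ext rfl (funext fun k => ?_)
    obtain rfl | h := eq_or_ne k j
    · simp [step, translate]
    · simp [step, translate, h]
  rw [hstep, staircase_translate]
  exact staircase_congr n fun l _ hl => hQ _ _ (List.isChain_cons_cons.2 ⟨⟨j, 0, hj, rfl⟩, hl⟩)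

end Staircase

/-! ### Bockstein cocycles -/

section Normalized

variable {X R : Type*} [CommRing R]

/-- A cochain that vanishes on the tuples with two equal consecutive entries. -/
def IsNormalized (c : Cochain X R) : Prop := ∀ l, ¬List.IsChain (· ≠ ·) l → c l = 0

lemma IsNormalized.link {c : Cochain X R} (hc : IsNormalized c) (y : X) :
    IsNormalized (link y c) := fun _ hl => hc _ fun h => hl h.tail

lemma IsNormalized.apply_cons_cons_self {c : Cochain X R} (hc : IsNormalized c) (y : X)
    (l : List X) : c (y :: y :: l) = 0 := hc _ (by simp)

variable {G ι : Type*} [AddCommGroup G] [Fintype G] [LinearOrder ι] [Fintype ι]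

/-- Evaluation of a cochain on the weighted sum of all paths with `D` steps from `a` in a single
join, starting at position `q`. -/
def orbitSum (ω : ℕ → G → R) : ℕ → ℕ → G → Cochain G R → R
  | 0, _, a, c => c [a]
  | D + 1, q, a, c => ∑ g, ω q g * orbitSum ω D (q + 1) (a + g) (link a c)

variable {M : ι → ℕ} {ω : ℕ → G → R}

lemma staircase_link_cup_succ (β : Cochain G R) (D n : ℕ) (x y : GridVertex G ι) (j : ι)
    (c : Cochain (GridVertex G ι) R) :
    staircase M ω n y (link x (cup (D + 1) (fun l => β (l.map fun y => y.2 j)) c)) =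
      staircase M ω n y (cup D (fun l => link (x.2 j) β (l.map fun y => y.2 j)) c) :=
  staircase_congr n fun l _ _ => by rw [link_apply, cup_succ_cons]; rfl

lemma staircase_step_cup_link {β : Cochain G R} (hβ : IsNormalized β) {D n : ℕ}
    {x : GridVertex G ι} {j k : ι} (hk : k ≠ j) {g : G} {c : Cochain (GridVertex G ι) R} :
    staircase M ω n (step x k g) (cup D (fun l => link (x.2 j) β (l.map fun y => y.2 j)) c) =
      0 := by
  rw [← map_zero (staircase M ω n (step x k g))]
  refine staircase_congr n fun l _ _ => ?_
  simp [cup_apply, step, Function.update_of_ne hk.symm, hβ.apply_cons_cons_self]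

-- A normalized cochain of the coordinate `j` only sees the paths whose first steps have direction
-- `j`.
lemma staircase_cup {β : Cochain G R} (hβ : IsNormalized β) (D n : ℕ) {x : GridVertex G ι} {j : ι}
    {c : Cochain (GridVertex G ι) R} {v : R} (hx : x.1 j ≤ M j)
    (hv : x.1 j + D ≤ M j → ∀ y : GridVertex G ι, y.1 = Function.update x.1 j (x.1 j + D) →
      staircase M ω n y c = v) :
    staircase M ω (n + D) x (cup D (fun l => β (l.map fun y => y.2 j)) c) =
      if x.1 j + D ≤ M j then
        shuffleSign R M x.1 j ^ D * orbitSum ω D (x.1 j) (x.2 j) β * v else 0 := by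
  induction D generalizing β x with
  | zero =>
    have hcup : staircase M ω n x (cup 0 (fun l => β (l.map fun y => y.2 j)) c) =
        staircase M ω n x (β [x.2 j] • c) :=
      staircase_congr n fun l _ _ => by simp [cup_zero_cons]
    simp [hcup, hx, hv hx x (by simp), orbitSum]
  | succ D ih =>
    rw [← add_assoc, staircase_succ, stepSum_apply, Finset.sum_eq_single_of_mem j (by simp)]
    swap
    · intro k _ hk
      simp only [directionSum_apply, staircase_link_cup_succ, staircase_step_cup_link hβ hk,
        mul_zero, Finset.sum_const_zero, ite_self]
    have hpos (g : G) : (step x j g).1 = Function.update x.1 j (x.1 j + 1) := rfl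
    have hgrp (g : G) : (step x j g).2 j = x.2 j + g := by simp [step]
    simp only [directionSum_apply, staircase_link_cup_succ]
    split_ifs with hj hD hD
    · have hih (g : G) := ih (hβ.link (x.2 j)) (x := step x j g) (by simpa [hpos] using hj)
        fun _ y hy => hv hD y (by rw [hy, hpos]; simp [add_assoc, add_comm])
      simp only [hpos, hgrp, Function.update_self, shuffleSign_update _ hj, lt_irrefl,
        if_false, add_assoc, add_comm 1 D, if_pos hD] at hih
      simp only [hih, orbitSum, Finset.mul_sum, Finset.sum_mul]
      exact Finset.sum_congr rfl fun g _ => by ring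
    · have hih (g : G) := ih (hβ.link (x.2 j)) (x := step x j g) (by simpa [hpos] using hj)
        fun hle _ _ => absurd hle (by simp only [hpos, Function.update_self]; omega)
      simp only [hpos, Function.update_self, add_assoc, add_comm 1 D, if_neg hD] at hih
      simp only [hih, mul_zero, Finset.sum_const_zero]
    · omega
    · rfl

end Normalized

/-- All entries agree or, for odd `p`, they take at most two neighbouring values. -/
def Consecutive {p : ℕ} (l : List (ZMod p)) : Prop :=
  ∃ g, ∀ a ∈ l, a = g ∨ (p ≠ 2 ∧ a = g + 1)

/-- The degree of the generator of the polynomial part of the cohomology of `ℤ/p`. -/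
def eulerDegree (p : ℕ) : ℕ := if p = 2 then 1 else 2

lemma eulerDegree_pos {p : ℕ} : 0 < eulerDegree p := by
  rw [eulerDegree]
  split_ifs <;> norm_num

/-- A translation invariant normalized cocycle on `ℤ/p` that represents a generator of the
polynomial part of the cohomology of `ℤ/p`, together with the weights of the cycles dual to its
powers. -/
structure BocksteinData (p : ℕ) [NeZero p] where
  /-- One less than the degree of the cocycle. -/
  predDegree : ℕ
  cocycle : Cochain (ZMod p) (ZMod p)
  weight : ℕ → ZMod p → ZMod p
  degree_eq : predDegree + 1 = eulerDegree p
  sum_weight : ∀ q, ∑ g, weight q g = 0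
  sum_weight_mul_weight : ∀ q h, ∑ g, weight q g * weight (q + 1) (h - g) = 0
  neg_one_pow_degree : (-1 : ZMod p) ^ (predDegree + 1) = 1
  coboundary_cocycle : coboundary cocycle = 0
  isNormalized : IsNormalized cocycle
  cocycle_map_add : ∀ s l, cocycle (l.map (· + s)) = cocycle l
  cocycle_eq_zero : ∀ {l}, Consecutive l → cocycle l = 0
  orbitSum_cocycle : ∀ {q} a, predDegree + 1 ∣ q →
    orbitSum weight (predDegree + 1) q a cocycle = 1
  /-- Up to the coboundary of an invariant cochain, the cocycle is additive. -/
  exists_coboundary_eq : ∀ {ι : Type} [Fintype ι] (a : ι → ZMod p),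
    ∃ b : Cochain (ZMod p × (ι → ZMod p)) (ZMod p),
      (∀ l, cocycle (l.map Prod.fst) - ∑ j, a j * cocycle (l.map fun v => v.2 j) =
        coboundary b l) ∧
      ∀ t l, b (l.map (· + (∑ j, a j * t j, t))) = b l

section LowDegree

variable {X Y R : Type*} [CommRing R]

/-- A function of one point as a cochain of degree zero. -/
def zeroCochain (T : X → R) : Cochain X R
  | [a] => T a
  | _ => 0

/-- A function of two points as a cochain of degree one. -/
def oneCochain (T : X → X → R) : Cochain X R
  | [a, b] => T a b
  | _ => 0

/-- A function of three points as a cochain of degree two. -/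
def twoCochain (T : X → X → X → R) : Cochain X R
  | [a, b, c] => T a b c
  | _ => 0

lemma zeroCochain_of_length_ne (T : X → R) {l : List X} (h : l.length ≠ 1) :
    zeroCochain T l = 0 := by
  rcases l with _ | ⟨a, _ | ⟨b, l⟩⟩ <;> simp_all [zeroCochain]

lemma oneCochain_of_length_ne (T : X → X → R) {l : List X} (h : l.length ≠ 2) :
    oneCochain T l = 0 := by
  rcases l with _ | ⟨a, _ | ⟨b, _ | ⟨c, l⟩⟩⟩ <;> simp_all [oneCochain]

lemma twoCochain_of_length_ne (T : X → X → X → R) {l : List X} (h : l.length ≠ 3) :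
    twoCochain T l = 0 := by
  rcases l with _ | ⟨a, _ | ⟨b, _ | ⟨c, _ | ⟨d, l⟩⟩⟩⟩ <;> simp_all [twoCochain]

lemma zeroCochain_map (T : Y → R) (f : X → Y) (l : List X) :
    zeroCochain T (l.map f) = zeroCochain (fun a => T (f a)) l := by
  rcases l with _ | ⟨a, _ | ⟨b, l⟩⟩ <;> rfl

lemma oneCochain_map (T : Y → Y → R) (f : X → Y) (l : List X) :
    oneCochain T (l.map f) = oneCochain (fun a b => T (f a) (f b)) l := by
  rcases l with _ | ⟨a, _ | ⟨b, _ | ⟨c, l⟩⟩⟩ <;> rfl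

lemma twoCochain_map (T : Y → Y → Y → R) (f : X → Y) (l : List X) :
    twoCochain T (l.map f) = twoCochain (fun a b c => T (f a) (f b) (f c)) l := by
  rcases l with _ | ⟨a, _ | ⟨b, _ | ⟨c, _ | ⟨d, l⟩⟩⟩⟩ <;> rfl

lemma isNormalized_oneCochain {T : X → X → R} (h : ∀ a, T a a = 0) :
    IsNormalized (oneCochain T) := by
  intro l hl
  rcases l with _ | ⟨a, _ | ⟨b, _ | ⟨c, l⟩⟩⟩ <;> simp_all [oneCochain]

lemma isNormalized_twoCochain {T : X → X → X → R} (h : ∀ a b, T a a b = 0)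
    (h' : ∀ a b, T a b b = 0) : IsNormalized (twoCochain T) := by
  intro l hl
  by_cases hlen : l.length = 3
  · obtain ⟨a, b, c, rfl⟩ := List.length_eq_three.1 hlen
    obtain rfl | hab := eq_or_ne a b
    · exact h a c
    · obtain rfl : b = c := by simpa [hab] using hl
      exact h' a b
  · exact twoCochain_of_length_ne T hlen

lemma coboundary_zeroCochain (T : X → R) :
    coboundary (zeroCochain T) = oneCochain fun a b => T b - T a := by
  ext l
  by_cases h : l.length = 2
  · obtain ⟨a, b, rfl⟩ := List.length_eq_two.1 h
    simp [coboundary_cons, zeroCochain, oneCochain]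
  · rw [oneCochain_of_length_ne _ h]
    exact coboundary_eq_zero fun l' _ hl => zeroCochain_of_length_ne _ (by omega)

lemma coboundary_oneCochain (T : X → X → R) :
    coboundary (oneCochain T) = twoCochain fun a b c => T b c - T a c + T a b := by
  ext l
  by_cases h : l.length = 3
  · obtain ⟨a, b, c, rfl⟩ := List.length_eq_three.1 h
    simp only [coboundary_cons, link_apply, oneCochain, twoCochain, coboundary_nil]
    ring
  · rw [twoCochain_of_length_ne _ h]
    exact coboundary_eq_zero fun l' _ hl => oneCochain_of_length_ne _ (by omega)

lemma coboundary_twoCochain_eq_zero {T : X → X → X → R}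
    (h : ∀ a b c d, T b c d - T a c d + T a b d - T a b c = 0) :
    coboundary (twoCochain T) = 0 := by
  ext l
  by_cases hl : l.length = 4
  · rcases l with _ | ⟨a, _ | ⟨b, _ | ⟨c, _ | ⟨d, _ | ⟨e, l⟩⟩⟩⟩⟩ <;> simp at hl
    simp only [coboundary_cons, link_apply, twoCochain, coboundary_nil, Pi.zero_apply]
    linear_combination h a b c d
  · exact coboundary_eq_zero fun l' _ hl' => twoCochain_of_length_ne _ (by omega)

end LowDegree

/-- The Bockstein data for `p = 2`: the degree one cocycle `(a, b) ↦ b - a`. -/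
def bocksteinDataTwo : BocksteinData 2 where
  predDegree := 0
  cocycle := oneCochain fun a b => b - a
  weight _ _ := 1
  degree_eq := rfl
  sum_weight _ := by decide
  sum_weight_mul_weight _ _ := by simp only [mul_one]; decide
  neg_one_pow_degree := rfl
  coboundary_cocycle := by
    rw [← coboundary_zeroCochain fun a => a, coboundary_coboundary]
  isNormalized := isNormalized_oneCochain fun a => sub_self a
  cocycle_map_add s l := by simp [oneCochain_map]
  cocycle_eq_zero {l} h := by
    obtain ⟨g, h⟩ := h
    rcases l with _ | ⟨a, _ | ⟨b, _ | ⟨c, l⟩⟩⟩ <;> simp_all [oneCochain]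
  orbitSum_cocycle a _ := by
    change ∑ g : ZMod 2, 1 * (a + g - a) = 1
    simp only [add_sub_cancel_left]
    decide
  exists_coboundary_eq a := by
    refine ⟨zeroCochain fun v => v.1 - ∑ j, a j * v.2 j, fun l => ?_, fun t l => ?_⟩
    · rw [coboundary_zeroCochain]
      rcases l with _ | ⟨v, _ | ⟨w, _ | ⟨u, l⟩⟩⟩ <;> simp only [oneCochain, List.map,
        mul_zero, Finset.sum_const_zero, sub_zero, mul_sub, Finset.sum_sub_distrib]
      ring
    · simp [zeroCochain_map, mul_add, Finset.sum_add_distrib]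

section Odd

variable {p : ℕ} [Fact p.Prime]

/-- The defect of additivity of the least absolute residue, divided by `p`. -/
def carry (a b c : ZMod p) : ℤ :=
  ((b - a).valMinAbs + (c - b).valMinAbs - (c - a).valMinAbs) / p

lemma intCast_prime_ne_zero : (p : ℤ) ≠ 0 := by exact_mod_cast (Fact.out : p.Prime).ne_zero

lemma mul_carry (a b c : ZMod p) :
    (p : ℤ) * carry a b c = (b - a).valMinAbs + (c - b).valMinAbs - (c - a).valMinAbs := by
  apply Int.mul_ediv_cancel'
  rw [← ZMod.intCast_zmod_eq_zero_iff_dvd]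
  push_cast
  simp

lemma carry_self_left (a b : ZMod p) : carry a a b = 0 := by simp [carry]

lemma carry_self_right (a b : ZMod p) : carry a b b = 0 := by simp [carry]

lemma carry_add (a b c s : ZMod p) : carry (a + s) (b + s) (c + s) = carry a b c := by
  simp [carry]

lemma carry_cocycle (a b c d : ZMod p) :
    carry b c d - carry a c d + carry a b d - carry a b c = 0 := by
  apply mul_left_cancel₀ (intCast_prime_ne_zero (p := p))
  simp only [mul_sub, mul_add, mul_carry]
  ring

lemma valMinAbs_one (hp2 : p ≠ 2) : (1 : ZMod p).valMinAbs = 1 := by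
  have := (Fact.out : p.Prime).two_le.lt_of_ne' hp2
  exact (ZMod.valMinAbs_spec _ _).2 ⟨by simp, by constructor <;> omega⟩

lemma valMinAbs_neg_one (hp2 : p ≠ 2) : (-1 : ZMod p).valMinAbs = -1 := by
  have := (Fact.out : p.Prime).two_le.lt_of_ne' hp2
  exact (ZMod.valMinAbs_spec _ _).2 ⟨by simp, by constructor <;> omega⟩

lemma carry_eq_zero_of_neighbours (hp2 : p ≠ 2) {g a b c : ZMod p} (ha : a = g ∨ a = g + 1)
    (hb : b = g ∨ b = g + 1) (hc : c = g ∨ c = g + 1) : carry a b c = 0 := by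
  apply mul_left_cancel₀ (intCast_prime_ne_zero (p := p))
  rw [mul_carry]
  rcases ha with rfl | rfl <;> rcases hb with rfl | rfl <;> rcases hc with rfl | rfl <;>
    simp [valMinAbs_one hp2, valMinAbs_neg_one hp2]

-- The terms other than `valMinAbs 1 = 1` telescope.
lemma sum_carry (hp2 : p ≠ 2) (x : ZMod p) : ∑ g : ZMod p, carry x (x + g) (x + g + 1) = 1 := by
  apply mul_left_cancel₀ (intCast_prime_ne_zero (p := p))
  have hshift : ∑ g : ZMod p, (g + 1).valMinAbs = ∑ g : ZMod p, g.valMinAbs :=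
    Equiv.sum_comp (Equiv.addRight 1) fun g : ZMod p => g.valMinAbs
  have hsub (g : ZMod p) : x + g + 1 - x = g + 1 := by ring
  simp [Finset.mul_sum, mul_carry, hsub, Finset.sum_add_distrib, hshift, valMinAbs_one hp2]

/-- The weights of the cycle dual to the powers of the Bockstein class: alternately the norm
element and the difference of a generator and the identity. -/
def oddWeight (q : ℕ) (g : ZMod p) : ZMod p :=
  if Even q then 1 else (if g = 1 then 1 else 0) - (if g = 0 then 1 else 0)

lemma sum_oddWeight (q : ℕ) : ∑ g : ZMod p, oddWeight q g = 0 := by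
  by_cases h : Even q <;> simp [oddWeight, h]

lemma sum_oddWeight_mul_oddWeight (q : ℕ) (h : ZMod p) :
    ∑ g, oddWeight q g * oddWeight (q + 1) (h - g) = 0 := by
  by_cases hq : Even q
  · have hone (g : ZMod p) : oddWeight q g = 1 := by simp [oddWeight, hq]
    simp only [hone, one_mul]
    exact (Equiv.sum_comp (Equiv.subLeft h) _).trans (sum_oddWeight (q + 1))
  · have hone (g : ZMod p) : oddWeight (q + 1) g = 1 := by
      simp [oddWeight, Nat.even_add_one, hq]
    simp only [hone, mul_one, sum_oddWeight]

lemma orbitSum_carry (hp2 : p ≠ 2) {q : ℕ} (hq : Even q) (a : ZMod p) :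
    orbitSum oddWeight 2 q a (twoCochain fun a b c => (carry a b c : ZMod p)) = 1 := by
  have hodd : ¬Even (q + 1) := by simpa [Nat.even_add_one] using hq
  have hsum := congrArg (Int.cast : ℤ → ZMod p) (sum_carry hp2 a)
  push_cast at hsum
  simp [orbitSum, oddWeight, hq, hodd, twoCochain, sub_mul, Finset.sum_sub_distrib,
    carry_self_right, hsum]

section CarryDefect

variable {ι : Type*} [Fintype ι]

/-- The failure of the least absolute residue to respect the linear combination with coefficients
`a`, corrected by a coboundary to become divisible by `p`, and divided by `p`. -/
def carryDefect (a : ι → ZMod p) (v w : ZMod p × (ι → ZMod p)) : ℤ :=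
  ((w.1 - v.1).valMinAbs - ∑ j, (a j).valMinAbs * (w.2 j - v.2 j).valMinAbs -
    ((w.1 - ∑ j, a j * w.2 j).valMinAbs - (v.1 - ∑ j, a j * v.2 j).valMinAbs)) / p

lemma mul_carryDefect (a : ι → ZMod p) (v w : ZMod p × (ι → ZMod p)) :
    (p : ℤ) * carryDefect a v w =
      (w.1 - v.1).valMinAbs - ∑ j, (a j).valMinAbs * (w.2 j - v.2 j).valMinAbs -
        ((w.1 - ∑ j, a j * w.2 j).valMinAbs - (v.1 - ∑ j, a j * v.2 j).valMinAbs) := by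
  apply Int.mul_ediv_cancel'
  rw [← ZMod.intCast_zmod_eq_zero_iff_dvd]
  push_cast
  simp only [mul_sub, Finset.sum_sub_distrib]
  ring

lemma carryDefect_add (a t : ι → ZMod p) (v w : ZMod p × (ι → ZMod p)) :
    carryDefect a (v + (∑ j, a j * t j, t)) (w + (∑ j, a j * t j, t)) = carryDefect a v w := by
  simp [carryDefect, mul_add, Finset.sum_add_distrib]

lemma carry_sub_sum_carry (a : ι → ZMod p) (u v w : ZMod p × (ι → ZMod p)) :
    (carry u.1 v.1 w.1 : ZMod p) - ∑ j, a j * carry (u.2 j) (v.2 j) (w.2 j) =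
      carryDefect a v w - carryDefect a u w + carryDefect a u v := by
  have hdefect : carry u.1 v.1 w.1 - ∑ j, (a j).valMinAbs * carry (u.2 j) (v.2 j) (w.2 j) =
      carryDefect a v w - carryDefect a u w + carryDefect a u v := by
    apply mul_left_cancel₀ (intCast_prime_ne_zero (p := p))
    simp only [mul_sub, mul_add, mul_carryDefect, Finset.mul_sum, mul_left_comm (p : ℤ),
      mul_carry, Finset.sum_sub_distrib, Finset.sum_add_distrib]
    ring
  have hcast := congrArg (Int.cast : ℤ → ZMod p) hdefect
  push_cast at hcast
  simpa only [ZMod.coe_valMinAbs] using hcast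

end CarryDefect

/-- The Bockstein data for odd `p`: the degree two cocycle of carries. -/
def bocksteinDataOdd (hp2 : p ≠ 2) : BocksteinData p where
  predDegree := 1
  cocycle := twoCochain fun a b c => (carry a b c : ZMod p)
  weight := oddWeight
  degree_eq := by simp [eulerDegree, hp2]
  sum_weight := sum_oddWeight
  sum_weight_mul_weight := sum_oddWeight_mul_oddWeight
  neg_one_pow_degree := by simp
  coboundary_cocycle := coboundary_twoCochain_eq_zero fun a b c d => by
    exact_mod_cast congrArg (Int.cast : ℤ → ZMod p) (carry_cocycle a b c d)
  isNormalized := isNormalized_twoCochain (fun a b => by simp [carry_self_left])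
    fun a b => by simp [carry_self_right]
  cocycle_map_add s l := by simp [twoCochain_map, carry_add]
  cocycle_eq_zero {l} h := by
    obtain ⟨g, h⟩ := h
    replace h (a : ZMod p) (ha : a ∈ l) : a = g ∨ a = g + 1 := (h a ha).imp_right And.right
    rcases l with _ | ⟨a, _ | ⟨b, _ | ⟨c, _ | ⟨d, l⟩⟩⟩⟩ <;> try rfl
    simp [twoCochain, carry_eq_zero_of_neighbours hp2 (h a (by simp)) (h b (by simp))
      (h c (by simp))]
  orbitSum_cocycle a hq := orbitSum_carry hp2 (even_iff_two_dvd.2 hq) a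
  exists_coboundary_eq a := by
    refine ⟨oneCochain fun v w => (carryDefect a v w : ZMod p), fun l => ?_, fun t l => ?_⟩
    · simp only [coboundary_oneCochain, twoCochain_map, ← carry_sub_sum_carry]
      rcases l with _ | ⟨u, _ | ⟨v, _ | ⟨w, _ | ⟨d, l⟩⟩⟩⟩ <;> simp [twoCochain]
    · simp only [oneCochain_map, carryDefect_add]

end Odd

/-- The Bockstein data of a prime. -/
def bocksteinData (p : ℕ) [Fact p.Prime] : BocksteinData p :=
  if h : p = 2 then h ▸ bocksteinDataTwo else bocksteinDataOdd h

/-! ### Products of linear combinations of Bockstein cocycles -/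

section ChoiceSum

variable {R ι κ : Type*} [CommRing R] [Fintype ι] [DecidableEq ι]

/-- The coefficient of `∏ j, X j ^ cap j` in the product of the linear forms `∑ j, α k j * X j` over
the members `k` of the list, provided that the exponents add up to the length of the list: the sum
over all ways to choose a variable in every factor, at most `cap j` times the variable `X j`. -/
def choiceSum (α : κ → ι → R) : (ι → ℕ) → List κ → R
  | _, [] => 1
  | cap, k :: ks =>
    ∑ j, if 0 < cap j then α k j * choiceSum α (Function.update cap j (cap j - 1)) ks else 0

lemma sum_mul_update_pred (rk cap : ι → ℕ) {j : ι} (hj : 0 < cap j) :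
    ∑ i, rk i * Function.update cap j (cap j - 1) i + rk j = ∑ i, rk i * cap i := by
  rw [Fintype.sum_eq_add_sum_compl j, Fintype.sum_eq_add_sum_compl j (fun i => rk i * cap i),
    add_right_comm, Function.update_self, ← Nat.mul_succ, Nat.succ_eq_add_one,
    Nat.sub_add_cancel hj]
  congr 1
  refine Finset.sum_congr rfl fun i hi => ?_
  rw [Function.update_of_ne (by simpa using hi)]

lemma sum_mul_count_map (rk : ι → ℕ) (ld : κ → ι) (ks : List κ) :
    ∑ j, rk j * (ks.map ld).count j = (ks.map fun k => rk (ld k)).sum := by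
  induction ks with
  | nil => simp
  | cons k ks ih => simp [List.count_cons, ← ih, mul_add, Finset.sum_add_distrib, add_comm]

variable {α : κ → ι → R} {ld : κ → ι} {rk : ι → ℕ}

lemma choiceSum_eq_zero (hα : ∀ k j, α k j ≠ 0 → j = ld k ∨ rk (ld k) < rk j) {ks : List κ}
    {cap : ι → ℕ} (h : ∑ j, rk j * cap j < (ks.map fun k => rk (ld k)).sum) :
    choiceSum α cap ks = 0 := by
  induction ks generalizing cap with
  | nil => simp at h
  | cons k ks ih =>
    refine Finset.sum_eq_zero fun j _ => ?_
    split_ifs with hj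
    · obtain h0 | h0 := eq_or_ne (α k j) 0
      · rw [h0, zero_mul]
      have hrk : rk (ld k) ≤ rk j := by
        rcases hα k j h0 with rfl | hlt
        · rfl
        · exact hlt.le
      have hcap := sum_mul_update_pred rk cap hj
      rw [List.map_cons, List.sum_cons] at h
      rw [ih (by omega), mul_zero]
    · rfl

-- By triangularity every other choice of variables has larger total rank.
lemma choiceSum_eq_prod (hα : ∀ k j, α k j ≠ 0 → j = ld k ∨ rk (ld k) < rk j) {ks : List κ}
    {cap : ι → ℕ} (h : ∀ j, cap j = (ks.map ld).count j) :
    choiceSum α cap ks = (ks.map fun k => α k (ld k)).prod := by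
  induction ks generalizing cap with
  | nil => rfl
  | cons k ks ih =>
    have hpos : 0 < cap (ld k) := by simp [h]
    have hpred (j : ι) :
        Function.update cap (ld k) (cap (ld k) - 1) j = (ks.map ld).count j := by
      obtain rfl | hj := eq_or_ne j (ld k)
      · simp [h]
      · simp [hj, h, hj.symm]
    rw [choiceSum, Finset.sum_eq_single_of_mem (ld k) (by simp), if_pos hpos, ih hpred,
      List.map_cons, List.prod_cons]
    intro j _ hj
    split_ifs with hc
    · obtain h0 | h0 := eq_or_ne (α k j) 0
      · rw [h0, zero_mul]
      have hlt := (hα k j h0).resolve_left hj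
      have hsum := sum_mul_update_pred rk cap hpos
      simp only [hpred, sum_mul_count_map] at hsum
      have hsum' := sum_mul_update_pred rk cap hc
      rw [choiceSum_eq_zero hα (by omega), mul_zero]
    · rfl

end ChoiceSum

section Evaluation

variable {p : ℕ} [NeZero p] {X Y ι κ : Type*}

lemma BocksteinData.cocycle_map_of_eq_add (B : BocksteinData p) {g g' : X → ZMod p} {s : ZMod p}
    {l : List X} (h : ∀ x ∈ l, g' x = g x + s) :
    B.cocycle (l.map g') = B.cocycle (l.map g) := by
  rw [← B.cocycle_map_add s (l.map g), List.map_map]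
  exact congrArg _ (List.map_congr_left h)

variable [Fintype ι]

/-- The linear combination with coefficients `a` of the pullbacks of the Bockstein cocycle along
the coordinates of `φ`. -/
def linearCocycle (B : BocksteinData p) (a : ι → ZMod p) (φ : X → ι → ZMod p) :
    Cochain X (ZMod p) :=
  ∑ j, a j • fun l => B.cocycle (l.map fun x => φ x j)

lemma linearCocycle_apply (B : BocksteinData p) (a : ι → ZMod p) (φ : X → ι → ZMod p)
    (l : List X) :
    linearCocycle B a φ l = ∑ j, a j * B.cocycle (l.map fun x => φ x j) := by
  simp [linearCocycle]

lemma linearCocycle_map (B : BocksteinData p) (a : ι → ZMod p) (φ : Y → ι → ZMod p) (f : X → Y)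
    (l : List X) : linearCocycle B a φ (l.map f) = linearCocycle B a (φ ∘ f) l := by
  simp [linearCocycle_apply, Function.comp_def]

lemma linearCocycle_map_of_eq_add (B : BocksteinData p) (a : ι → ZMod p) {φ : X → ι → ZMod p}
    {f : X → X} {l : List X} {s : ι → ZMod p} (h : ∀ x ∈ l, φ (f x) = φ x + s) :
    linearCocycle B a φ (l.map f) = linearCocycle B a φ l := by
  rw [linearCocycle_map]
  simp only [linearCocycle_apply]
  exact Finset.sum_congr rfl fun j _ => congrArg (a j * ·)
    (B.cocycle_map_of_eq_add fun x hx => congrFun (h x hx) j)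

variable [LinearOrder ι]

lemma staircase_cup_linearCocycle (B : BocksteinData p) (a : ι → ZMod p) {M : ι → ℕ} {n : ℕ}
    {x : GridVertex (ZMod p) ι} {c : Cochain (GridVertex (ZMod p) ι) (ZMod p)} {v : ι → ZMod p}
    (hx : ∀ j, x.1 j ≤ M j) (hdvd : ∀ j, B.predDegree + 1 ∣ x.1 j)
    (hv : ∀ j, x.1 j + (B.predDegree + 1) ≤ M j → ∀ y : GridVertex (ZMod p) ι,
      y.1 = Function.update x.1 j (x.1 j + (B.predDegree + 1)) →
        staircase M B.weight n y c = v j) :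
    staircase M B.weight (n + (B.predDegree + 1)) x
        (cup (B.predDegree + 1) (linearCocycle B a Prod.snd) c) =
      ∑ j, if x.1 j + (B.predDegree + 1) ≤ M j then a j * v j else 0 := by
  simp only [linearCocycle, map_sum, LinearMap.sum_apply, map_smul, LinearMap.smul_apply]
  refine Finset.sum_congr rfl fun j _ => ?_
  rw [staircase_cup B.isNormalized _ _ (hx j) (hv j), B.orbitSum_cocycle _ (hdvd j),
    shuffleSign, pow_right_comm, B.neg_one_pow_degree]
  simp

lemma staircase_cupProd_linearCocycle (B : BocksteinData p) (α : κ → ι → ZMod p) {M cap : ι → ℕ}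
    (ks : List κ) {x : GridVertex (ZMod p) ι} (hx : ∀ j, B.predDegree + 1 ∣ x.1 j)
    (hM : ∀ j, M j = x.1 j + (B.predDegree + 1) * cap j) :
    staircase M B.weight ((B.predDegree + 1) * ks.length) x
      (cupProd (B.predDegree + 1) (fun k => linearCocycle B (α k) Prod.snd) ks) =
    choiceSum α cap ks := by
  induction ks generalizing cap x with
  | nil => rfl
  | cons k ks ih =>
    have hpos (j : ι) : x.1 j + (B.predDegree + 1) ≤ M j ↔ 0 < cap j := by
      rw [hM j]
      constructor
      · intro h
        by_contra h0
        simp [Nat.eq_zero_of_not_pos h0] at h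
      · intro h
        have := Nat.mul_le_mul_left (B.predDegree + 1) h
        omega
    rw [List.length_cons, mul_add, mul_one]
    refine (staircase_cup_linearCocycle B (α k)
      (v := fun j => choiceSum α (Function.update cap j (cap j - 1)) ks)
      (fun j => (hM j).ge.trans' (Nat.le_add_right ..)) hx fun j hle y hy => ?_).trans ?_
    · refine ih (fun i => ?_) fun i => ?_ <;> obtain rfl | h := eq_or_ne i j
      · simpa [hy] using hx i
      · simpa [hy, h] using hx i
      · obtain ⟨c, hc⟩ := Nat.exists_eq_add_of_lt ((hpos i).1 hle)
        rw [hy, hM i, Function.update_self, Function.update_self, hc]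
        simp only [Nat.zero_add, Nat.add_sub_cancel]
        ring
      · simpa [hy, h] using hM i
    · simp only [hpos]
      rfl

end Evaluation

/-! ### Sectors of the punctured plane -/

section Sector

variable {p : ℕ}

/-- The index of the sector, among `p` congruent ones around the origin, that contains `z`. -/
def sector (p : ℕ) (z : ℂ) : ZMod p := ((⌊p * z.arg / (2 * Real.pi)⌋ : ℤ) : ZMod p)

lemma exists_arg_eq_add {z : ℂ} (hz : z ≠ 0) {θ : ℝ} (h : z = ‖z‖ * Complex.exp (θ * Complex.I)) :
    ∃ n : ℤ, z.arg = θ + n * (2 * Real.pi) := by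
  have hexp : Complex.exp (z.arg * Complex.I) = Complex.exp (θ * Complex.I) :=
    mul_left_cancel₀ (by simpa using hz) ((Complex.norm_mul_exp_arg_mul_I z).trans h)
  obtain ⟨n, hn⟩ := Complex.exp_eq_exp_iff_exists_int.1 hexp
  refine ⟨n, ?_⟩
  have hcast : ((z.arg : ℝ) : ℂ) = ((θ + n * (2 * Real.pi) : ℝ) : ℂ) := by
    apply mul_right_cancel₀ Complex.I_ne_zero
    rw [hn]
    push_cast
    ring
  exact_mod_cast hcast

lemma sector_eq_floor {z : ℂ} (hz : z ≠ 0) {θ : ℝ} (h : z = ‖z‖ * Complex.exp (θ * Complex.I)) :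
    sector p z = ((⌊p * θ / (2 * Real.pi)⌋ : ℤ) : ZMod p) := by
  obtain ⟨n, hn⟩ := exists_arg_eq_add hz h
  have harg : p * z.arg / (2 * Real.pi) = p * θ / (2 * Real.pi) + ((p * n : ℤ) : ℝ) := by
    rw [hn]
    push_cast
    field_simp
  rw [sector, harg, Int.floor_add_intCast]
  simp

lemma sector_real_eq {c : ℝ} {z w : ℂ} (hz : z.im = 0) (hw : w.im = 0)
    (hzn : c ≤ ‖z‖) (hd : ‖w - z‖ < c) : sector p w = sector p z := by
  lift z to ℝ using hz
  lift w to ℝ using hw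
  rw [← Complex.ofReal_sub, Complex.norm_real, Real.norm_eq_abs, abs_lt] at hd
  rw [Complex.norm_real, Real.norm_eq_abs] at hzn
  rw [sector, sector]
  obtain h | h := le_or_gt 0 z
  · rw [abs_of_nonneg h] at hzn
    rw [Complex.arg_ofReal_of_nonneg h, Complex.arg_ofReal_of_nonneg (by linarith)]
  · rw [abs_of_neg h] at hzn
    rw [Complex.arg_ofReal_of_neg h, Complex.arg_ofReal_of_neg (by linarith)]

variable [Fact p.Prime]

lemma sector_stdAddChar_mul (g : ZMod p) {z : ℂ} (hz : z ≠ 0) :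
    sector p (ZMod.stdAddChar g * z) = sector p z + g := by
  have hp : (p : ℝ) ≠ 0 := by exact_mod_cast (Fact.out : p.Prime).ne_zero
  obtain ⟨n, rfl⟩ := ZMod.intCast_surjective g
  have hnorm : ‖ZMod.stdAddChar (n : ZMod p) * z‖ = ‖z‖ := by simp
  have hchar : ZMod.stdAddChar (n : ZMod p) ≠ 0 := by
    rw [← norm_ne_zero_iff]
    simp
  have hpolar : ZMod.stdAddChar (n : ZMod p) * z =
      ‖ZMod.stdAddChar (n : ZMod p) * z‖ *
        Complex.exp ((z.arg + 2 * Real.pi * n / p : ℝ) * Complex.I) := by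
    rw [hnorm]
    conv_lhs => rw [← Complex.norm_mul_exp_arg_mul_I z]
    rw [ZMod.stdAddChar_coe, mul_left_comm, ← Complex.exp_add]
    congr 2
    push_cast
    ring
  have hturn : p * (z.arg + 2 * Real.pi * n / p) / (2 * Real.pi) =
      p * z.arg / (2 * Real.pi) + (n : ℝ) := by
    field_simp
  rw [sector_eq_floor (mul_ne_zero hchar hz) hpolar, hturn, Int.floor_add_intCast, sector]
  push_cast
  rfl

-- The quotient of two nearby points of norm at least `c` is close to `1`, so its argument is small.
lemma exists_abs_arg_div_lt {δ : ℝ} (hδ : 0 < δ) : ∃ ε : ℝ, 0 < ε ∧ ε ≤ 1 ∧ ∀ (c : ℝ) (z w : ℂ),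
    0 < c → c ≤ ‖z‖ → ‖w - z‖ < ε * c → |(w / z).arg| < δ := by
  obtain ⟨ε, hε, h⟩ :=
    Metric.continuousAt_iff.1 (Complex.continuousAt_arg Complex.one_mem_slitPlane) δ hδ
  refine ⟨min ε 1, lt_min hε one_pos, min_le_right _ _, fun c z w hc hz hd => ?_⟩
  have hz0 : z ≠ 0 := norm_pos_iff.1 (hc.trans_le hz)
  have hdist : dist (w / z) 1 < ε := by
    rw [dist_eq_norm, div_sub_one hz0, norm_div, div_lt_iff₀ (norm_pos_iff.2 hz0)]
    calc
      ‖w - z‖ < min ε 1 * c := hd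
      _ ≤ ε * c := by gcongr; exact min_le_left _ _
      _ ≤ ε * ‖z‖ := by gcongr
  simpa using h hdist

lemma eq_norm_mul_exp_arg_add {z : ℂ} (hz : z ≠ 0) (w : ℂ) :
    w = ‖w‖ * Complex.exp ((z.arg + (w / z).arg : ℝ) * Complex.I) := by
  calc
    w = z * (w / z) := by field_simp
    _ = (‖z‖ * Complex.exp (z.arg * Complex.I)) *
        (‖w / z‖ * Complex.exp ((w / z).arg * Complex.I)) := by
      simp only [Complex.norm_mul_exp_arg_mul_I]
    _ = (‖z‖ * ‖w / z‖ : ℝ) * Complex.exp ((z.arg + (w / z).arg : ℝ) * Complex.I) := by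
      push_cast
      rw [add_mul, Complex.exp_add]
      ring
    _ = ‖w‖ * Complex.exp ((z.arg + (w / z).arg : ℝ) * Complex.I) := by
      rw [← norm_mul, mul_div_cancel₀ _ hz]

lemma sector_eq_or_eq_add_one {z w : ℂ} (hz : z ≠ 0) (hw : w ≠ 0)
    (h : |(w / z).arg| < Real.pi / p) :
    sector p w = ((⌊p * z.arg / (2 * Real.pi) - 1 / 2⌋ : ℤ) : ZMod p) ∨
      sector p w = ((⌊p * z.arg / (2 * Real.pi) - 1 / 2⌋ : ℤ) : ZMod p) + 1 := by
  have hp : (0 : ℝ) < p := by exact_mod_cast (Fact.out : p.Prime).pos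
  set u : ℝ := p * z.arg / (2 * Real.pi) with hu
  set t : ℝ := p * (w / z).arg / (2 * Real.pi) with ht
  have hsector : sector p w = ((⌊u + t⌋ : ℤ) : ZMod p) := by
    rw [sector_eq_floor hw (eq_norm_mul_exp_arg_add hz w)]
    congr 2
    rw [hu, ht]
    ring
  have ht2 : |t| < 1 / 2 := by
    rw [ht, abs_div, abs_mul, abs_of_pos hp, abs_of_pos Real.two_pi_pos,
      div_lt_iff₀ Real.two_pi_pos]
    linarith [(lt_div_iff₀ hp).1 h]
  rw [abs_lt] at ht2
  have hlower : ⌊u - 1 / 2⌋ ≤ ⌊u + t⌋ := Int.floor_le_floor (by linarith)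
  have hupper : ⌊u + t⌋ ≤ ⌊u - 1 / 2⌋ + 1 := by
    rw [← Int.floor_add_one]
    exact Int.floor_le_floor (by linarith)
  rw [hsector]
  exact_mod_cast (show ⌊u + t⌋ = ⌊u - 1 / 2⌋ ∨ ⌊u + t⌋ = ⌊u - 1 / 2⌋ + 1 by omega).imp
    (congrArg (Int.cast : ℤ → ZMod p)) (congrArg (Int.cast : ℤ → ZMod p))

lemma exists_consecutive_map_sector (p : ℕ) [Fact p.Prime] :
    ∃ ε : ℝ, 0 < ε ∧ ∀ (c : ℝ) (l : List ℂ), 0 < c →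
      (p = 2 → ∀ z ∈ l, z.im = 0) → (∀ z ∈ l, c ≤ ‖z‖) →
      (∀ z ∈ l, ∀ w ∈ l, ‖w - z‖ < ε * c) → Consecutive (l.map (sector p)) := by
  have hp : (0 : ℝ) < p := by exact_mod_cast (Fact.out : p.Prime).pos
  obtain ⟨ε, hε, hε1, harg⟩ := exists_abs_arg_div_lt (div_pos Real.pi_pos hp)
  refine ⟨ε, hε, fun c l hc hreal hnorm hd => ?_⟩
  rcases l with _ | ⟨z, l⟩
  · exact ⟨0, by simp⟩
  have hz := hnorm z (by simp)
  simp only [Consecutive, List.forall_mem_map]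
  by_cases hp2 : p = 2
  · refine ⟨sector p z, fun w hw => Or.inl ?_⟩
    refine sector_real_eq (hreal hp2 z (by simp)) (hreal hp2 w hw) hz ?_
    exact (hd z (by simp) w hw).trans_le (mul_le_of_le_one_left hc.le hε1)
  · refine ⟨((⌊p * z.arg / (2 * Real.pi) - 1 / 2⌋ : ℤ) : ZMod p), fun w hw => ?_⟩
    refine (sector_eq_or_eq_add_one (norm_pos_iff.1 (hc.trans_le hz))
      (norm_pos_iff.1 (hc.trans_le (hnorm w hw))) ?_).imp_right fun h => ⟨hp2, h⟩
    exact harg c z w hc hz (hd z (by simp) w hw)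

end Sector

/-! ### Products of joins -/

section JoinProduct

variable {G ι : Type*} {M : ι → ℕ}

/-- The vertices of the staircase triangulation of the product of joins whose `j`-th join has
`M j + 1` factors. -/
abbrev JoinVertex (M : ι → ℕ) (G : Type*) := (∀ j, Fin (M j + 1)) × (ι → G)

/-- Two vertices lie in a common simplex of the staircase triangulation: their positions are
comparable and their group elements agree wherever the positions do. -/
def Compatible (a b : JoinVertex M G) : Prop :=
  (a.1 ≤ b.1 ∨ b.1 ≤ a.1) ∧ ∀ j, a.1 j = b.1 j → a.2 j = b.2 j

lemma Compatible.refl (a : JoinVertex M G) : Compatible a a :=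
  ⟨Or.inl le_rfl, fun _ _ => rfl⟩

lemma Compatible.symm {a b : JoinVertex M G} (h : Compatible a b) : Compatible b a :=
  ⟨h.1.symm, fun j hj => (h.2 j hj.symm).symm⟩

/-- The lowest vertices of the support. All of them carry the same group elements if the support is
a simplex. -/
def IsLowest (w : JoinVertex M G → ℝ) (q : JoinVertex M G) : Prop :=
  w q ≠ 0 ∧ ∀ q', w q' ≠ 0 → q.1 ≤ q'.1

variable [Fintype ι] [DecidableEq ι] [Fintype G]

/-- The product of joins of copies of `G`, realized as the weights on the vertices whose support is
a simplex of the staircase triangulation. -/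
def joinProduct (M : ι → ℕ) (G : Type*) [Fintype G] : Set (JoinVertex M G → ℝ) :=
  {w ∈ stdSimplex ℝ (JoinVertex M G) | ∀ a b, w a ≠ 0 → w b ≠ 0 → Compatible a b}

/-- The simplex spanned by the vertices in `A`. -/
def cell (A : Set (JoinVertex M G)) : Set (JoinVertex M G → ℝ) :=
  {w ∈ stdSimplex ℝ (JoinVertex M G) | ∀ q ∉ A, w q = 0}

/-- The simplices of the staircase triangulation. -/
def cells (M : ι → ℕ) (G : Type*) [Fintype G] : Set (Set (JoinVertex M G → ℝ)) :=
  cell '' {A | ∀ a ∈ A, ∀ b ∈ A, Compatible a b}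

lemma convex_of_mem_cells {C : Set (JoinVertex M G → ℝ)} (hC : C ∈ cells M G) : Convex ℝ C := by
  obtain ⟨A, -, rfl⟩ := hC
  refine (convex_stdSimplex ℝ _).inter fun w hw w' hw' a b _ _ _ q hq => ?_
  simp [hw q hq, hw' q hq]

lemma subset_joinProduct_of_mem_cells {C : Set (JoinVertex M G → ℝ)} (hC : C ∈ cells M G) :
    C ⊆ joinProduct M G := by
  rintro w hw
  obtain ⟨A, hA, rfl⟩ := hC
  have h (q : JoinVertex M G) (hq : w q ≠ 0) : q ∈ A := not_imp_comm.1 (hw.2 q) hq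
  exact ⟨hw.1, fun a b ha hb => hA a (h a ha) b (h b hb)⟩

lemma isCompact_joinProduct : IsCompact (joinProduct M G) := by
  have h : joinProduct M G = stdSimplex ℝ (JoinVertex M G) ∩
      ⋂ (a) (b) (_ : ¬Compatible a b), {w | w a * w b = 0} := by
    ext w
    simp only [joinProduct, Set.mem_inter_iff, Set.mem_iInter, Set.mem_ofPred_eq, mul_eq_zero]
    refine and_congr_right fun _ => forall₂_congr fun a b => ?_
    tauto
  rw [h]
  refine (isCompact_stdSimplex ℝ _).inter_right (isClosed_iInter fun a => isClosed_iInter fun b =>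
    isClosed_iInter fun _ => isClosed_eq ?_ continuous_const)
  fun_prop

lemma exists_ne_zero_of_mem_joinProduct {w : JoinVertex M G → ℝ} (hw : w ∈ joinProduct M G) :
    ∃ q, w q ≠ 0 := by
  by_contra! h
  simpa [h] using hw.1.2

lemma exists_isLowest {w : JoinVertex M G → ℝ} (hw : w ∈ joinProduct M G) :
    ∃ q, IsLowest w q := by
  obtain ⟨q, hq, hmin⟩ := Set.Finite.exists_minimalFor (fun q : JoinVertex M G => q.1)
    {q | w q ≠ 0} (Set.toFinite _) (exists_ne_zero_of_mem_joinProduct hw)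
  exact ⟨q, hq, fun q' hq' => (hw.2 q q' hq hq').1.elim id (hmin hq')⟩

end JoinProduct

section PointMass

variable {G ι : Type*} {M : ι → ℕ} [Fintype ι] [DecidableEq G]

/-- A grid vertex as a vertex of the triangulation. Positions wrap around beyond `M`. -/
def toJoinVertex (M : ι → ℕ) (x : GridVertex G ι) : JoinVertex M G :=
  (fun j => Fin.ofNat (M j + 1) (x.1 j), x.2)

/-- The point mass at a grid vertex. -/
def pointMass (M : ι → ℕ) (x : GridVertex G ι) : JoinVertex M G → ℝ :=
  Pi.single (toJoinVertex M x) 1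

lemma pointMass_ne_zero_iff {x : GridVertex G ι} {q : JoinVertex M G} :
    pointMass M x q ≠ 0 ↔ q = toJoinVertex M x := by
  simp [pointMass, Pi.single_apply]

lemma pointMass_mem_cell [DecidableEq ι] [Fintype G] {A : Set (JoinVertex M G)} {x : GridVertex G ι}
    (hx : toJoinVertex M x ∈ A) : pointMass M x ∈ cell A := by
  refine ⟨single_mem_stdSimplex ℝ _, fun q hq => ?_⟩
  by_contra h
  exact hq (pointMass_ne_zero_iff.1 h ▸ hx)

end PointMass

section Action

variable {G ι : Type*} [AddCommGroup G] {M : ι → ℕ}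

/-- The linear map that moves the weight of each vertex to its translate by `s`. -/
def act (s : ι → G) : (JoinVertex M G → ℝ) →ₗ[ℝ] (JoinVertex M G → ℝ) :=
  LinearMap.funLeft ℝ ℝ fun q => (q.1, q.2 - s)

lemma act_apply (s : ι → G) (w : JoinVertex M G → ℝ) (q : JoinVertex M G) :
    act s w q = w (q.1, q.2 - s) := rfl

open Classical in
/-- The group elements of the lowest vertex of the support, and `0` if there is none. -/
def lowest (w : JoinVertex M G → ℝ) : ι → G :=
  if h : ∃ q, IsLowest w q then h.choose.2 else 0

lemma lowest_eq {w : JoinVertex M G → ℝ} (hw : ∀ a b, w a ≠ 0 → w b ≠ 0 → Compatible a b)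
    {q : JoinVertex M G} (hq : IsLowest w q) : lowest w = q.2 := by
  have h : ∃ q, IsLowest w q := ⟨q, hq⟩
  have hc := h.choose_spec
  rw [lowest, dif_pos h]
  exact funext fun j => (hw _ _ hc.1 hq.1).2 j (le_antisymm (hc.2 _ hq.1 j) (hq.2 _ hc.1 j))

section

variable [Fintype ι] [DecidableEq G]

lemma act_pointMass (s : ι → G) (x : GridVertex G ι) :
    act s (pointMass M x) = pointMass M (translate s x) := by
  funext q
  rw [act_apply, pointMass, pointMass, Pi.single_apply, Pi.single_apply]
  refine if_congr ?_ rfl rfl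
  rw [Prod.ext_iff, Prod.ext_iff]
  exact and_congr_right' sub_eq_iff_eq_add

lemma lowest_pointMass (x : GridVertex G ι) : lowest (pointMass M x) = x.2 := by
  refine lowest_eq (q := toJoinVertex M x) (fun a b ha hb => ?_) ⟨?_, fun q hq => ?_⟩
  · rw [pointMass_ne_zero_iff.1 ha, pointMass_ne_zero_iff.1 hb]
    exact Compatible.refl _
  · exact pointMass_ne_zero_iff.2 rfl
  · rw [pointMass_ne_zero_iff.1 hq]

end

variable [Fintype ι] [DecidableEq ι] [Fintype G]

lemma act_mem_joinProduct {w : JoinVertex M G → ℝ} (hw : w ∈ joinProduct M G) (s : ι → G) :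
    act s w ∈ joinProduct M G := by
  refine ⟨⟨fun q => hw.1.1 _, ?_⟩, fun a b ha hb => ?_⟩
  · rw [← hw.1.2]
    exact Equiv.sum_comp ((Equiv.refl _).prodCongr (Equiv.subRight s)) w
  · obtain ⟨hle, heq⟩ := hw.2 _ _ ha hb
    exact ⟨hle, fun j hj => sub_left_injective (heq j hj)⟩

lemma lowest_act {w : JoinVertex M G → ℝ} (hw : w ∈ joinProduct M G) (s : ι → G) :
    lowest (act s w) = lowest w + s := by
  obtain ⟨q, hq⟩ := exists_isLowest hw
  rw [lowest_eq hw.2 hq, lowest_eq (act_mem_joinProduct hw s).2 (q := (q.1, q.2 + s))]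
  exact ⟨by simpa [act_apply] using hq.1, fun q' hq' => hq.2 (q'.1, q'.2 - s) hq'⟩

end Action

section Path

variable {G ι : Type*} {M : ι → ℕ}

/-- The relation between the vertices of a staircase path in their order along the path. -/
def Precedes (x y : GridVertex G ι) : Prop := x.1 ≤ y.1 ∧ ∀ j, x.1 j = y.1 j → x.2 j = y.2 j

lemma Precedes.trans {x y z : GridVertex G ι} (h : Precedes x y) (h' : Precedes y z) :
    Precedes x z := by
  refine ⟨h.1.trans h'.1, fun j hj => ?_⟩
  have hxy : x.1 j = y.1 j := le_antisymm (h.1 j) (hj ▸ h'.1 j)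
  exact (h.2 j hxy).trans (h'.2 j (hxy.symm.trans hj))

lemma Precedes.compatible {x y : GridVertex G ι} (h : Precedes x y) (hx : x.1 ≤ M)
    (hy : y.1 ≤ M) : Compatible (toJoinVertex M x) (toJoinVertex M y) := by
  have hval {z : GridVertex G ι} (hz : z.1 ≤ M) (j : ι) :
      ((toJoinVertex M z).1 j : ℕ) = z.1 j := Nat.mod_eq_of_lt (Nat.lt_succ_of_le (hz j))
  refine ⟨Or.inl fun j => ?_, fun j hj => h.2 j ?_⟩
  · rw [Fin.le_def, hval hx, hval hy]
    exact h.1 j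
  · rw [← hval hx, ← hval hy, hj]

variable [AddCommGroup G] [LinearOrder ι]

lemma IsStep.precedes {x y : GridVertex G ι} (h : IsStep M x y) : Precedes x y := by
  obtain ⟨j, g, -, rfl⟩ := h
  refine ⟨fun k => ?_, fun k hk => ?_⟩ <;> obtain rfl | hkj := eq_or_ne k j
  · simp [step]
  · simp [step, hkj]
  · simp [step] at hk
  · simp [step, hkj]

lemma IsStep.le {x y : GridVertex G ι} (h : IsStep M x y) (hx : x.1 ≤ M) : y.1 ≤ M := by
  obtain ⟨j, g, hj, rfl⟩ := h
  exact update_le_iff.2 ⟨hj, fun k _ => hx k⟩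

lemma isChain_isStep_pairwise {l : List (GridVertex G ι)} (hl : List.IsChain (IsStep M) l) :
    l.Pairwise Precedes :=
  have : Trans (Precedes (G := G) (ι := ι)) Precedes Precedes := ⟨Precedes.trans⟩
  (hl.imp fun _ _ h => h.precedes).pairwise

lemma le_of_isChain_isStep {x : GridVertex G ι} (hx : x.1 ≤ M) {l : List (GridVertex G ι)}
    (hl : List.IsChain (IsStep M) (x :: l)) : ∀ y ∈ x :: l, y.1 ≤ M := by
  induction l generalizing x with
  | nil => simpa
  | cons z l ih =>
    rw [List.isChain_cons_cons] at hl
    exact List.forall_mem_cons.2 ⟨hx, ih (hl.1.le hx) hl.2⟩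

lemma exists_mem_cells_of_isChain [Fintype ι] [Fintype G] [DecidableEq G] {x : GridVertex G ι}
    (hx : x.1 ≤ M) {l : List (GridVertex G ι)} (hl : List.IsChain (IsStep M) (x :: l)) :
    ∃ C ∈ cells M G, ∀ y ∈ x :: l, pointMass M y ∈ C := by
  have hM := le_of_isChain_isStep hx hl
  have hcomp : ((x :: l).map (toJoinVertex M)).Pairwise Compatible :=
    List.pairwise_map.2 <| (isChain_isStep_pairwise hl).imp_of_mem
      fun hy hz h => h.compatible (hM _ hy) (hM _ hz)
  have : Std.Symm (Compatible (M := M) (G := G)) := ⟨fun _ _ h => h.symm⟩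
  exact ⟨cell {q | q ∈ (x :: l).map (toJoinVertex M)}, ⟨_, fun a ha b hb =>
    hcomp.forall_of_forall (fun _ _ => Compatible.refl _) ha hb, rfl⟩,
    fun y hy => pointMass_mem_cell (List.mem_map_of_mem hy)⟩

end Path

/-! ### Common zeros of equivariant functions -/

lemma exists_forall_exists_le_norm {X κ E : Type*} [TopologicalSpace X] [Finite κ]
    [NormedAddCommGroup E] {Y : Set X} (hY : IsCompact Y) {f : κ → X → E}
    (hf : ∀ k, ContinuousOn (f k) Y) (h : ∀ x ∈ Y, ∃ k, f k x ≠ 0) :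
    ∃ c : ℝ, 0 < c ∧ ∀ x ∈ Y, ∃ k, c ≤ ‖f k x‖ := by
  cases nonempty_fintype κ
  obtain ⟨c, hc, hle⟩ := hY.exists_forall_le' (f := fun x => ‖fun k => f k x‖) (a := 0)
    (continuousOn_pi.2 hf).norm fun x hx => by
      obtain ⟨k, hk⟩ := h x hx
      exact (norm_pos_iff.2 hk).trans_le (norm_le_pi_norm (fun k => f k x) k)
  refine ⟨c / 2, half_pos hc, fun x hx => ?_⟩
  by_contra! hlt
  have hnorm : ‖fun k => f k x‖ ≤ c / 2 :=
    (pi_norm_le_iff_of_nonneg (half_pos hc).le).2 fun k => (hlt k).le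
  linarith [hle x hx]

section Label

variable {p : ℕ} [Fact p.Prime] {ι κ : Type*} {M : ι → ℕ}

lemma exists_consecutive_map_sector_comp {X : Type*} [PseudoMetricSpace X] [Finite κ] {Y : Set X}
    (hY : IsCompact Y) {f : κ → X → ℂ} (hf : ∀ k, ContinuousOn (f k) Y)
    (hre : p = 2 → ∀ k, ∀ w ∈ Y, (f k w).im = 0) (h : ∀ w ∈ Y, ∃ k, f k w ≠ 0) :
    ∃ δ : ℝ, 0 < δ ∧ ∀ l : List X, l ≠ [] → (∀ y ∈ l, y ∈ Y) → DiamLE δ l →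
      ∃ k, (∀ y ∈ l, f k y ≠ 0) ∧ Consecutive (l.map (sector p ∘ f k)) := by
  cases nonempty_fintype κ
  obtain ⟨c, hc, hlow⟩ := exists_forall_exists_le_norm hY hf h
  obtain ⟨ε, hε, hsector⟩ := exists_consecutive_map_sector p
  have hc2 : 0 < c / 2 := half_pos hc
  have hη : 0 < min (ε * (c / 2)) (c / 2) := lt_min (mul_pos hε hc2) hc2
  obtain ⟨δ, hδ, huc⟩ := Metric.uniformContinuousOn_iff.1
    (hY.uniformContinuousOn_of_continuous (continuousOn_pi.2 hf)) _ hη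
  refine ⟨δ / 2, half_pos hδ, fun l hl hlY hdiam => ?_⟩
  obtain ⟨y₀, hy₀⟩ := List.exists_mem_of_ne_nil l hl
  obtain ⟨k, hk⟩ := hlow y₀ (hlY y₀ hy₀)
  have hclose (y : X) (hy : y ∈ l) (z : X) (hz : z ∈ l) :
      ‖f k z - f k y‖ < min (ε * (c / 2)) (c / 2) := by
    rw [← dist_eq_norm]
    exact (dist_le_pi_dist (fun k => f k z) (fun k => f k y) k).trans_lt
      (huc z (hlY z hz) y (hlY y hy) ((hdiam z hz y hy).trans_lt (half_lt_self hδ)))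
  have hge (y : X) (hy : y ∈ l) : c / 2 ≤ ‖f k y‖ := by
    linarith [(hclose y hy y₀ hy₀).trans_le (min_le_right _ _), norm_sub_norm_le (f k y₀) (f k y)]
  refine ⟨k, fun y hy => norm_pos_iff.1 (hc2.trans_le (hge y hy)), ?_⟩
  rw [← List.map_map]
  refine hsector (c / 2) _ hc2 (fun hp => ?_) ?_ ?_
  · simpa only [List.forall_mem_map] using fun y hy => hre hp k y (hlY y hy)
  · simpa only [List.forall_mem_map] using hge
  · simpa only [List.forall_mem_map] using
      fun y hy z hz => (hclose y hy z hz).trans_le (min_le_left _ _)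

variable [Fintype ι]

open Classical in
/-- The sector of `f w`, extended to the zeros of `f` so that it transforms by the linear form with
coefficients `a` everywhere. -/
def label (a : ι → ZMod p) (f : (JoinVertex M (ZMod p) → ℝ) → ℂ) (w : JoinVertex M (ZMod p) → ℝ) :
    ZMod p :=
  if f w = 0 then ∑ j, a j * lowest w j else sector p (f w)

lemma label_of_ne_zero (a : ι → ZMod p) {f : (JoinVertex M (ZMod p) → ℝ) → ℂ}
    {w : JoinVertex M (ZMod p) → ℝ} (h : f w ≠ 0) : label a f w = sector p (f w) := if_neg h

/-- The pullback of the Bockstein cocycle along the labels of `f`, which represents the Euler class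
of the line bundle whose sections are the functions that transform like `f`. -/
def labelCocycle (B : BocksteinData p) (a : ι → ZMod p) (f : (JoinVertex M (ZMod p) → ℝ) → ℂ) :
    Cochain (JoinVertex M (ZMod p) → ℝ) (ZMod p) :=
  fun l => B.cocycle (l.map (label a f))

lemma coboundary_labelCocycle (B : BocksteinData p) (a : ι → ZMod p)
    (f : (JoinVertex M (ZMod p) → ℝ) → ℂ) : coboundary (labelCocycle B a f) = 0 := by
  funext l
  exact (coboundary_comp_map _ _ _).trans (congrFun B.coboundary_cocycle _)

variable [DecidableEq ι]

lemma label_act {a : ι → ZMod p} {f : (JoinVertex M (ZMod p) → ℝ) → ℂ} {s : ι → ZMod p}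
    {w : JoinVertex M (ZMod p) → ℝ} (hw : w ∈ joinProduct M (ZMod p))
    (hf : f (act s w) = ZMod.stdAddChar (∑ j, a j * s j) * f w) :
    label a f (act s w) = label a f w + ∑ j, a j * s j := by
  by_cases h0 : f w = 0
  · simp [label, hf, h0, lowest_act hw, mul_add, Finset.sum_add_distrib]
  · have hact : f (act s w) ≠ 0 := by
      rw [hf]
      exact mul_ne_zero (norm_pos_iff.1 (by simp)) h0
    rw [label_of_ne_zero a h0, label_of_ne_zero a hact, hf, sector_stdAddChar_mul _ h0]

lemma linearCocycle_lowest_mem (B : BocksteinData p) (a : ι → ZMod p) :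
    linearCocycle B a lowest ∈ invariantCochains (ZMod p) act (cells M (ZMod p)) :=
  fun _ _ hC _ hl => linearCocycle_map_of_eq_add B a fun w hw =>
    lowest_act (subset_joinProduct_of_mem_cells hC (hl w hw)) _

lemma labelCocycle_mem (B : BocksteinData p) {a : ι → ZMod p}
    {f : (JoinVertex M (ZMod p) → ℝ) → ℂ} (hf : ∀ s, ∀ w ∈ joinProduct M (ZMod p),
      f (act s w) = ZMod.stdAddChar (∑ j, a j * s j) * f w) :
    labelCocycle B a f ∈ invariantCochains (ZMod p) act (cells M (ZMod p)) := by
  intro s C hC l hl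
  have hlabel (w : JoinVertex M (ZMod p) → ℝ) (hw : w ∈ l) :
      label a f (act s w) = label a f w + ∑ j, a j * s j :=
    have hw' := subset_joinProduct_of_mem_cells hC (hl w hw)
    label_act hw' (hf s w hw')
  rw [labelCocycle, List.map_map]
  exact B.cocycle_map_of_eq_add hlabel

end Label

section FundamentalChain

variable {p : ℕ} [Fact p.Prime] {ι κ : Type*} [Fintype ι] [LinearOrder ι] {M : ι → ℕ}

/-- Evaluation on the fundamental chain of the product of joins. -/
def fundamentalChain (B : BocksteinData p) (M : ι → ℕ) :
    Cochain (JoinVertex M (ZMod p) → ℝ) (ZMod p) →ₗ[ZMod p] ZMod p :=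
  staircase M B.weight (∑ j, M j) 0 ∘ₗ LinearMap.funLeft (ZMod p) (ZMod p) (List.map (pointMass M))

lemma fundamentalChain_coboundary_eq_zero (B : BocksteinData p) (hM : 0 < ∑ j, M j)
    {Q : Cochain (JoinVertex M (ZMod p) → ℝ) (ZMod p)}
    (hQ : Q ∈ invariantCochains (ZMod p) act (cells M (ZMod p))) :
    fundamentalChain B M (coboundary Q) = 0 := by
  obtain ⟨n, hn⟩ := Nat.exists_eq_succ_of_ne_zero hM.ne'
  have hpull : LinearMap.funLeft (ZMod p) (ZMod p) (List.map (pointMass M)) (coboundary Q) =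
      coboundary fun l => Q (l.map (pointMass M)) :=
    funext fun l => (coboundary_comp_map _ _ l).symm
  rw [fundamentalChain, LinearMap.comp_apply, hpull, hn]
  refine staircase_coboundary_eq_zero B.sum_weight B.sum_weight_mul_weight n fun s l hl => ?_
  obtain ⟨C, hC, hlC⟩ := exists_mem_cells_of_isChain (Nat.zero_le <| M ·) hl
  rw [← hQ s C hC (l.map (pointMass M)) (List.forall_mem_map.2 fun y hy =>
    hlC y (List.mem_cons_of_mem _ hy)), List.map_map, List.map_map]
  exact congrArg Q (List.map_congr_left fun y _ => (act_pointMass s y).symm)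

lemma fundamentalChain_subdivide_iterate_eq_zero (B : BocksteinData p) {δ : ℝ} (hδ : 0 < δ)
    {c : Cochain (JoinVertex M (ZMod p) → ℝ) (ZMod p)}
    (hc : ∀ l, l ≠ [] → (∀ y ∈ l, y ∈ joinProduct M (ZMod p)) → DiamLE δ l → c l = 0) :
    ∃ N, fundamentalChain B M (subdivide^[N] c) = 0 := by
  obtain ⟨n, hn⟩ : ∃ n, n = ∑ j, M j := ⟨_, rfl⟩
  obtain ⟨N, hN⟩ := exists_pow_lt_of_lt_one hδ
    (show (n / (n + 1) : ℝ) < 1 from (div_lt_one (by positivity)).2 (lt_add_one _))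
  refine ⟨N, ?_⟩
  rw [fundamentalChain, LinearMap.comp_apply, ← hn, ← map_zero (staircase M B.weight n 0)]
  refine staircase_congr n fun l hl hchain => ?_
  obtain ⟨C, hC, hlC⟩ := exists_mem_cells_of_isChain (Nat.zero_le <| M ·) hchain
  rw [LinearMap.funLeft_apply, Pi.zero_apply]
  refine subdivide_iterate_eq_zero (n := n) (convex_of_mem_cells hC) zero_le_one N
    (fun l' hl' hlen hdiam => hc l' ?_ (fun y hy => ?_) fun x hx y hy => ?_)
    (List.forall_mem_map.2 hlC) (by simp [hl]) ?_
  · exact List.ne_nil_of_length_eq_add_one hlen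
  · exact subset_joinProduct_of_mem_cells hC (hl' y hy)
  · exact (hdiam x hx y hy).trans ((mul_one _).trans_le hN.le)
  · simp only [DiamLE, List.forall_mem_map]
    exact fun x _ y _ => (Metric.dist_le_diam_of_mem (bounded_stdSimplex _)
      (single_mem_stdSimplex ℝ _) (single_mem_stdSimplex ℝ _)).trans diam_stdSimplex_le

lemma fundamentalChain_cupProd_lowest_ne_zero [Fintype κ] (B : BocksteinData p)
    {α : κ → ι → ZMod p} {ld : κ → ι} {rk : ι → ℕ} (hld : ∀ k, α k (ld k) ≠ 0)
    (hα : ∀ k j, α k j ≠ 0 → j = ld k ∨ rk (ld k) < rk j)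
    (hM : ∀ j, M j = (B.predDegree + 1) * (Finset.univ.filter fun k => ld k = j).card) :
    fundamentalChain B M (cupProd (B.predDegree + 1) (fun k => linearCocycle B (α k) lowest)
      Finset.univ.toList) ≠ 0 := by
  set ks : List κ := Finset.univ.toList
  have hcount (j : ι) : (Finset.univ.filter fun k => ld k = j).card = (ks.map ld).count j := by
    rw [← Multiset.coe_count, ← Multiset.map_coe, Finset.coe_toList, Multiset.count_map,
      Finset.card]
    simp only [Finset.filter_val, eq_comm]
  have hdim : ∑ j, M j = (B.predDegree + 1) * ks.length := by
    rw [Finset.length_toList,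
      Finset.card_eq_sum_card_fiberwise (f := ld) (t := Finset.univ) (by simp)]
    simp only [hM, ← Finset.mul_sum]
  have hpull : LinearMap.funLeft (ZMod p) (ZMod p) (List.map (pointMass M))
      (cupProd (B.predDegree + 1) (fun k => linearCocycle B (α k) lowest) ks) =
        cupProd (B.predDegree + 1) (fun k => linearCocycle B (α k) Prod.snd) ks :=
    funext fun l => cupProd_map ks fun k l' _ => by
      rw [linearCocycle_map, Function.comp_def]
      simp only [lowest_pointMass]
  rw [fundamentalChain, LinearMap.comp_apply, hpull, hdim, staircase_cupProd_linearCocycle B α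
    (cap := fun j => (ks.map ld).count j) ks (by simp) (by simp [hM, hcount]),
    choiceSum_eq_prod hα fun _ => rfl]
  simp [List.prod_eq_zero_iff, hld]

end FundamentalChain

section CommonZero

variable {p : ℕ} [Fact p.Prime] {ι : Type} [Fintype ι] {M : ι → ℕ}

lemma exists_labelCocycle_sub_eq_coboundary [DecidableEq ι] (B : BocksteinData p) {a : ι → ZMod p}
    {f : (JoinVertex M (ZMod p) → ℝ) → ℂ} (hf : ∀ s, ∀ w ∈ joinProduct M (ZMod p),
      f (act s w) = ZMod.stdAddChar (∑ j, a j * s j) * f w) :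
    ∃ b ∈ invariantCochains (ZMod p) act (cells M (ZMod p)),
      labelCocycle B a f - linearCocycle B a lowest = coboundary b := by
  obtain ⟨b, hb, hadd⟩ := B.exists_coboundary_eq a
  refine ⟨fun l => b (l.map fun w => (label a f w, lowest w)), fun s C hC l hl => ?_,
    funext fun l => ?_⟩
  · have hpair (w : JoinVertex M (ZMod p) → ℝ) (hw : w ∈ l) :
        (label a f (act s w), lowest (act s w)) =
          (label a f w, lowest w) + (∑ j, a j * s j, s) := by
      have hw' := subset_joinProduct_of_mem_cells hC (hl w hw)
      rw [label_act hw' (hf s w hw'), lowest_act hw']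
      rfl
    simp only [← hadd s (l.map fun w => (label a f w, lowest w)), List.map_map]
    exact congrArg b (List.map_congr_left hpair)
  · rw [coboundary_comp_map, ← hb, List.map_map, Pi.sub_apply, linearCocycle_apply]
    simp only [List.map_map]
    rfl

lemma fundamentalChain_cupProd_labelCocycle [LinearOrder ι] (B : BocksteinData p)
    (hpos : 0 < ∑ j, M j) {κ : Type*} {α : κ → ι → ZMod p}
    {f : κ → (JoinVertex M (ZMod p) → ℝ) → ℂ}
    (hact : ∀ k s, ∀ w ∈ joinProduct M (ZMod p),
      f k (act s w) = ZMod.stdAddChar (∑ j, α k j * s j) * f k w) (ks : List κ) :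
    fundamentalChain B M
        (cupProd (B.predDegree + 1) (fun k => labelCocycle B (α k) (f k)) ks) =
      fundamentalChain B M
        (cupProd (B.predDegree + 1) (fun k => linearCocycle B (α k) lowest) ks) := by
  choose b hbS hb using fun k => exists_labelCocycle_sub_eq_coboundary B (hact k)
  obtain ⟨Q, hQS, -, hQ⟩ := exists_cupProd_sub_eq_coboundary unitCochain_mem_invariantCochains
    (fun n _ ha _ hc => cup_mem_invariantCochains n ha hc) B.predDegree
    (fun k => coboundary_labelCocycle B (α k) (f k)) hb (fun k => labelCocycle_mem B (hact k))
    (fun k => linearCocycle_lowest_mem B (α k)) hbS ks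
  rw [← sub_eq_zero, ← map_sub, hQ, fundamentalChain_coboundary_eq_zero B hpos hQS]

lemma fundamentalChain_cupProd_labelCocycle_eq_zero [LinearOrder ι] (B : BocksteinData p)
    (hpos : 0 < ∑ j, M j) {κ : Type*} [Fintype κ] {α : κ → ι → ZMod p}
    {f : κ → (JoinVertex M (ZMod p) → ℝ) → ℂ}
    (hf : ∀ k, ContinuousOn (f k) (joinProduct M (ZMod p)))
    (hre : p = 2 → ∀ k, ∀ w ∈ joinProduct M (ZMod p), (f k w).im = 0)
    (hact : ∀ k s, ∀ w ∈ joinProduct M (ZMod p),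
      f k (act s w) = ZMod.stdAddChar (∑ j, α k j * s j) * f k w)
    (hne : ∀ w ∈ joinProduct M (ZMod p), ∃ k, f k w ≠ 0) :
    fundamentalChain B M (cupProd (B.predDegree + 1) (fun k => labelCocycle B (α k) (f k))
      Finset.univ.toList) = 0 := by
  obtain ⟨δ, hδ, hconsec⟩ := exists_consecutive_map_sector_comp isCompact_joinProduct hf hre hne
  obtain ⟨N, hN⟩ := fundamentalChain_subdivide_iterate_eq_zero B (M := M)
    (c := cupProd (B.predDegree + 1) (fun k => labelCocycle B (α k) (f k)) Finset.univ.toList) hδ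
    fun l hl hlY hdiam => by
      obtain ⟨k, hk0, g, hg⟩ := hconsec l hl hlY hdiam
      refine cupProd_eq_zero _ (Finset.mem_toList.2 (Finset.mem_univ k)) fun l' hl' =>
        B.cocycle_eq_zero ⟨g, List.forall_mem_map.2 fun w hw => ?_⟩
      rw [label_of_ne_zero _ (hk0 w (hl'.subset hw))]
      exact hg _ (List.mem_map_of_mem (hl'.subset hw))
  rwa [map_subdivide_iterate (fun C => convex_of_mem_cells)
    (fun Q => fundamentalChain_coboundary_eq_zero B hpos) N
    (coboundary_cupProd _ (fun k => coboundary_labelCocycle B (α k) (f k)) _)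
    (cupProd_mem unitCochain_mem_invariantCochains
      (fun n _ ha _ hc => cup_mem_invariantCochains n ha hc) _
      (fun k => labelCocycle_mem B (hact k)) _)] at hN

-- Otherwise the product of the Euler classes would vanish, but it contains the monomial dual to the
-- fundamental class with the coefficient `∏ k, α k (ld k)`.
theorem exists_common_zero [DecidableEq ι] {κ : Type*} [Fintype κ]
    {α : κ → ι → ZMod p} {ld : κ → ι} {rk : ι → ℕ} (hld : ∀ k, α k (ld k) ≠ 0)
    (hα : ∀ k j, α k j ≠ 0 → j = ld k ∨ rk (ld k) < rk j)
    (hM : ∀ j, M j = eulerDegree p * (Finset.univ.filter fun k => ld k = j).card)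
    {f : κ → (JoinVertex M (ZMod p) → ℝ) → ℂ}
    (hf : ∀ k, ContinuousOn (f k) (joinProduct M (ZMod p)))
    (hre : p = 2 → ∀ k, ∀ w ∈ joinProduct M (ZMod p), (f k w).im = 0)
    (hact : ∀ k s, ∀ w ∈ joinProduct M (ZMod p),
      f k (act s w) = ZMod.stdAddChar (∑ j, α k j * s j) * f k w) :
    ∃ w ∈ joinProduct M (ZMod p), ∀ k, f k w = 0 := by
  let : LinearOrder ι :=
    { PartialOrder.lift (Fintype.equivFin ι) (Equiv.injective _) with
      le_total := fun i j => le_total (Fintype.equivFin ι i) (Fintype.equivFin ι j)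
      toDecidableLE := Classical.decRel _
      toDecidableEq := ‹DecidableEq ι› }
  by_contra! hne
  let B := bocksteinData p
  have hM' (j : ι) : M j = (B.predDegree + 1) * (Finset.univ.filter fun k => ld k = j).card := by
    rw [hM, B.degree_eq]
  have hpos : 0 < ∑ j, M j := by
    obtain ⟨C, hC, h0⟩ := exists_mem_cells_of_isChain (M := M) (G := ZMod p) (x := 0) (l := [])
      (Nat.zero_le <| M ·) (List.isChain_singleton _)
    obtain ⟨k, -⟩ := hne _ (subset_joinProduct_of_mem_cells hC (h0 0 (by simp)))
    refine (Nat.mul_pos B.predDegree.succ_pos ?_).trans_le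
      ((hM' (ld k)).ge.trans (Finset.single_le_sum (fun _ _ => Nat.zero_le _) (Finset.mem_univ _)))
    exact Finset.card_pos.2 ⟨k, by simp⟩
  exact fundamentalChain_cupProd_lowest_ne_zero B hld hα hM'
    ((fundamentalChain_cupProd_labelCocycle B hpos hact _).symm.trans
      (fundamentalChain_cupProd_labelCocycle_eq_zero B hpos hf hre hact hne))

end CommonZero

/-! ### Fourier analysis on elementary abelian groups -/

section Fourier

variable {p : ℕ} {κ : Type*} [Fintype κ]

section

variable [NeZero p]

/-- The pairing of `(ℤ/p)^κ` with itself that identifies the group with its complex characters. -/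
def pairing (χ g : κ → ZMod p) : ℂ := ZMod.stdAddChar (χ ⬝ᵥ g)

lemma pairing_zero_left (g : κ → ZMod p) : pairing 0 g = 1 := by simp [pairing]

lemma pairing_zero_right (χ : κ → ZMod p) : pairing χ 0 = 1 := by simp [pairing]

lemma pairing_add_left (χ χ' g : κ → ZMod p) :
    pairing (χ + χ') g = pairing χ g * pairing χ' g := by
  simp [pairing, add_dotProduct, AddChar.map_add_eq_mul]

lemma pairing_add_right (χ g h : κ → ZMod p) :
    pairing χ (g + h) = pairing χ g * pairing χ h := by
  simp [pairing, dotProduct_add, AddChar.map_add_eq_mul]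

lemma pairing_neg_left (χ g : κ → ZMod p) : pairing (-χ) g = (starRingEnd ℂ) (pairing χ g) := by
  simp [pairing, AddChar.map_neg_eq_conj]

variable [DecidableEq κ]

lemma sum_pairing {g : κ → ZMod p} (hg : g ≠ 0) : ∑ χ : κ → ZMod p, pairing χ g = 0 := by
  let ψ : AddChar (κ → ZMod p) ℂ :=
    { toFun := fun χ => pairing χ g
      map_zero_eq_one' := pairing_zero_left g
      map_add_eq_mul' := fun χ χ' => pairing_add_left χ χ' g }
  obtain ⟨a, ha⟩ := Function.ne_iff.1 hg
  suffices hψ : ψ ≠ 0 from AddChar.sum_eq_zero_iff_ne_zero.2 hψ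
  refine fun h => ha (ZMod.injective_stdAddChar ?_)
  calc (ZMod.stdAddChar (g a) : ℂ) = ψ (Pi.single a 1) := by simp [ψ, pairing]
    _ = ZMod.stdAddChar 0 := by rw [h, AddChar.zero_apply, AddChar.map_zero_eq_one]

lemma eq_expect_of_fourier_eq_zero {T : (κ → ZMod p) → ℂ}
    (h : ∀ χ ≠ 0, 𝔼 g, pairing χ g * T g = 0) (g : κ → ZMod p) : T g = 𝔼 g', T g' := by
  have hinv : ∑ χ, pairing χ (-g) * 𝔼 g', pairing χ g' * T g' = 𝔼 g', T g' := by
    rw [Finset.sum_eq_single 0 (fun χ _ hχ => by rw [h χ hχ, mul_zero]) (by simp)]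
    simp [pairing_zero_left]
  rw [← hinv]
  simp only [Finset.mul_expect, ← mul_assoc, ← pairing_add_right]
  rw [← Finset.expect_sum_comm]
  simp only [← Finset.sum_mul]
  rw [Fintype.expect_eq_sum_div_card, Finset.sum_eq_single g]
  · simp [pairing_zero_right, NeZero.ne]
  · intro g' _ hg'
    rw [sum_pairing (by rwa [Ne, neg_add_eq_zero, eq_comm]), zero_mul]
  · simp

end

/-- A choice of one element from each pair of inverse nonzero elements. -/
def IsHalf {V : Type*} [AddGroup V] [Fintype V] (x : V) : Prop :=
  x ≠ 0 ∧ Fintype.equivFin V x ≤ Fintype.equivFin V (-x)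

lemma isHalf_or_isHalf_neg {V : Type*} [AddGroup V] [Fintype V] {x : V} (hx : x ≠ 0) :
    IsHalf x ∨ IsHalf (-x) := by
  rw [IsHalf, IsHalf, neg_neg]
  exact (le_total _ _).imp (⟨hx, ·⟩) (⟨neg_ne_zero.2 hx, ·⟩)

lemma neg_eq_of_isHalf_neg {V : Type*} [AddGroup V] [Fintype V] {x : V} (hx : IsHalf x)
    (hx' : IsHalf (-x)) : -x = x := by
  have h := hx'.2
  rw [neg_neg] at h
  exact (Fintype.equivFin V).injective (le_antisymm h hx.2)

lemma eq_of_fourier_eq_zero_of_isHalf [NeZero p] [DecidableEq κ] {T : (κ → ZMod p) → ℝ}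
    (h : ∀ χ, IsHalf χ → 𝔼 g, pairing χ g * (T g : ℂ) = 0) (g g' : κ → ZMod p) :
    T g = T g' := by
  have hall (χ : κ → ZMod p) (hχ : χ ≠ 0) : 𝔼 g, pairing χ g * (T g : ℂ) = 0 := by
    obtain hχ | hχ := isHalf_or_isHalf_neg hχ
    · exact h χ hχ
    · rw [← map_eq_zero (starRingEnd ℂ), map_expect, ← h _ hχ]
      simp only [map_mul, pairing_neg_left, Complex.conj_ofReal]
  exact Complex.ofReal_injective
    ((eq_expect_of_fourier_eq_zero hall g).trans (eq_expect_of_fourier_eq_zero hall g').symm)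

section Prime

variable [Fact p.Prime]

lemma two_ne_zero_of_ne_two (hp : p ≠ 2) : (2 : ZMod p) ≠ 0 :=
  Ring.two_ne_zero (by rwa [ZMod.ringChar_zmod_n])

lemma im_stdAddChar (hp : p = 2) (a : ZMod p) : (ZMod.stdAddChar a : ℂ).im = 0 := by
  subst hp
  have h : (ZMod.stdAddChar a : ℂ) * ZMod.stdAddChar a = 1 := by
    rw [← AddChar.map_add_eq_mul, CharTwo.add_self_eq_zero, AddChar.map_zero_eq_one]
  rcases mul_self_eq_one_iff.1 h with h | h <;> simp [h]

lemma im_pairing (hp : p = 2) (χ g : κ → ZMod p) : (pairing χ g).im = 0 := im_stdAddChar hp _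

lemma stdAddChar_ne_neg (hp : p ≠ 2) (a b : ZMod p) :
    (ZMod.stdAddChar a : ℂ) ≠ -ZMod.stdAddChar b := by
  intro h
  have hpow (c : ZMod p) : (ZMod.stdAddChar c : ℂ) ^ p = 1 := by
    rw [← AddChar.map_nsmul_eq_pow, nsmul_eq_mul, CharP.cast_eq_zero, zero_mul,
      AddChar.map_zero_eq_one]
  have hneg := (Fact.out : p.Prime).odd_of_ne_two hp |>.neg_pow (ZMod.stdAddChar b : ℂ)
  rw [← h, hpow, hpow] at hneg
  norm_num at hneg

-- For odd `p` there are two summands, and `-1` is not a `p`-th root of unity.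
lemma eq_zero_of_sum_stdAddChar_mul_eq_zero {γ : ℕ → ZMod p} {a : ℕ → ℝ} (ha : ∀ i, 0 ≤ a i)
    (h : ∑ i ∈ Finset.range (eulerDegree p), ZMod.stdAddChar (γ i) * (a i : ℂ) = 0) :
    ∀ i < eulerDegree p, a i = 0 := by
  have hnorm (i : ℕ) : ‖ZMod.stdAddChar (γ i) * (a i : ℂ)‖ = a i := by
    rw [norm_mul, AddChar.norm_apply, one_mul, Complex.norm_of_nonneg (ha i)]
  by_cases hp : p = 2
  · simp only [eulerDegree, if_pos hp, Finset.sum_range_one] at h ⊢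
    intro i hi
    rw [Nat.lt_one_iff.1 hi, ← hnorm, h, norm_zero]
  · simp only [eulerDegree, if_neg hp, Finset.sum_range_succ, Finset.sum_range_zero,
      zero_add] at h ⊢
    have hneg := eq_neg_of_add_eq_zero_left h
    have heq : a 0 = a 1 := by rw [← hnorm, hneg, norm_neg, hnorm]
    have hone : a 1 = 0 := by
      by_contra hone
      rw [heq, ← neg_mul] at hneg
      exact stdAddChar_ne_neg hp _ _ (mul_right_cancel₀ (Complex.ofReal_ne_zero.2 hone) hneg)
    intro i hi
    interval_cases i
    exacts [heq.trans hone, hone]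

variable [DecidableEq κ]

lemma card_isHalf_le [DecidablePred (IsHalf : (κ → ZMod p) → Prop)] :
    eulerDegree p * Fintype.card {χ : κ → ZMod p // IsHalf χ} ≤
      p ^ Fintype.card κ - 1 := by
  have hcard : Fintype.card {χ : κ → ZMod p // χ ≠ 0} = p ^ Fintype.card κ - 1 := by simp
  rw [← hcard]
  by_cases hp : p = 2
  · rw [eulerDegree, if_pos hp, one_mul]
    exact Fintype.card_subtype_mono _ _ fun χ hχ => hχ.1
  · rw [eulerDegree, if_neg hp, two_mul, ← Fintype.card_sum]
    have hdisj (a b : {χ : κ → ZMod p // IsHalf χ}) : a.1 ≠ -b.1 := fun h => b.2.1 <| by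
      have hb := neg_eq_of_isHalf_neg b.2 (h ▸ a.2)
      rw [← add_eq_zero_iff_neg_eq, ← two_smul (ZMod p)] at hb
      exact (smul_eq_zero.1 hb).resolve_left (two_ne_zero_of_ne_two hp)
    refine Fintype.card_le_of_injective
      (Sum.elim (fun χ => ⟨χ.1, χ.2.1⟩) fun χ => ⟨-χ.1, neg_ne_zero.2 χ.2.1⟩) ?_
    rintro (a | a) (b | b) h <;> simp only [Sum.elim_inl, Sum.elim_inr, Subtype.mk.injEq] at h
    · rw [Subtype.ext h]
    · exact (hdisj a b h).elim
    · exact (hdisj b a h.symm).elim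
    · rw [Subtype.ext (neg_injective h)]

end Prime

end Fourier

section Lead

variable {R : Type*} [Zero R] [DecidableEq R] {n : ℕ}

/-- The first index at which a nonzero vector is nonzero. -/
def lead (v : Fin n → R) (hv : v ≠ 0) : Fin n :=
  (Finset.univ.filter (v · ≠ 0)).min' <| by
    obtain ⟨i, hi⟩ := Function.ne_iff.1 hv
    exact ⟨i, by simpa using hi⟩

lemma apply_lead_ne_zero (v : Fin n → R) (hv : v ≠ 0) : v (lead v hv) ≠ 0 :=
  (Finset.mem_filter.1 (Finset.min'_mem (Finset.univ.filter (v · ≠ 0)) _)).2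

lemma lead_le {v : Fin n → R} (hv : v ≠ 0) {i : Fin n} (hi : v i ≠ 0) : lead v hv ≤ i :=
  Finset.min'_le _ _ (by simpa using hi)

end Lead

/-! ### Points and directions of a configuration -/

section BlockPoint

variable {G ι κ : Type*} {M : ι → ℕ} [Fintype G] [DecidableEq G] [Fintype ι] [DecidableEq ι]
  [Fintype κ] {w : JoinVertex M G → ℝ}

/-- The barycentric coordinates of the unnormalized point that the factors `b a` of a product of
joins assign to a group element `g`. A vertex of the product contributes to the vertex of the
simplex whose number is the sum of its positions in these factors. -/
def blockPoint (b : κ → ι) (g : κ → G) (n : ℕ) (w : JoinVertex M G → ℝ) : Fin n → ℝ := fun P =>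
  ∑ q : JoinVertex M G with ∑ a, (q.1 (b a) : ℕ) = P ∧ q.2 ∘ b = g, w q

lemma continuous_blockPoint (b : κ → ι) (g : κ → G) (n : ℕ) :
    Continuous (blockPoint (M := M) b g n) :=
  continuous_pi fun _ => continuous_finsetSum _ fun q _ => continuous_apply q

lemma blockPoint_act [AddCommGroup G] (s : ι → G) (b : κ → ι) (g : κ → G) (n : ℕ)
    (w : JoinVertex M G → ℝ) :
    blockPoint b g n (act s w) = blockPoint b (g - s ∘ b) n w := by
  funext P
  refine Finset.sum_equiv ((Equiv.refl _).prodCongr (Equiv.subRight s)) (fun q => ?_)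
    fun _ _ => rfl
  simp only [Finset.mem_filter, Finset.mem_univ, true_and]
  exact and_congr_right' (sub_left_injective.eq_iff (a := q.2 ∘ b) (b := g)).symm

lemma blockPoint_nonneg (hw : w ∈ joinProduct M G) (b : κ → ι) (g : κ → G) (n : ℕ) (P : Fin n) :
    0 ≤ blockPoint b g n w P :=
  Finset.sum_nonneg fun q _ => hw.1.1 q

lemma sum_blockPoint [DecidableEq κ] (hw : w ∈ joinProduct M G) (b : κ → ι) {n : ℕ}
    (hn : ∑ a, M (b a) < n) : ∑ g : κ → G, ∑ P, blockPoint b g n w P = 1 := by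
  have hlt (q : JoinVertex M G) : ∑ a, (q.1 (b a) : ℕ) < n :=
    (Finset.sum_le_sum fun a _ => (q.1 (b a)).is_le).trans_lt hn
  rw [← hw.1.2, ← Fintype.sum_prod_type',
    ← Finset.sum_fiberwise Finset.univ fun q => (q.2 ∘ b, (⟨_, hlt q⟩ : Fin n))]
  refine Finset.sum_congr rfl fun x _ => Finset.sum_congr ?_ fun _ _ => rfl
  ext q
  simp [Prod.ext_iff, Fin.ext_iff, and_comm]

-- The positions in the support form a chain, so their sum determines them.
lemma eq_of_blockPoint_ne_zero (hw : w ∈ joinProduct M G) {b : κ → ι} {g g' : κ → G} {n : ℕ}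
    {P : Fin n} (h : blockPoint b g n w P ≠ 0) (h' : blockPoint b g' n w P ≠ 0) : g = g' := by
  obtain ⟨q, hq, hwq⟩ := Finset.exists_ne_zero_of_sum_ne_zero h
  obtain ⟨q', hq', hwq'⟩ := Finset.exists_ne_zero_of_sum_ne_zero h'
  obtain ⟨hP, rfl⟩ := (Finset.mem_filter.1 hq).2
  obtain ⟨hP', rfl⟩ := (Finset.mem_filter.1 hq').2
  obtain ⟨hle, hcompat⟩ := hw.2 q q' hwq hwq'
  have heq {q q' : JoinVertex M G} (hle : q.1 ≤ q'.1)
      (hsum : ∑ a, (q.1 (b a) : ℕ) = ∑ a, (q'.1 (b a) : ℕ)) (a : κ) : q.1 (b a) = q'.1 (b a) :=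
    Fin.ext ((Finset.sum_eq_sum_iff_of_le fun a _ => Fin.le_def.1 (hle (b a))).1 hsum a
      (Finset.mem_univ a))
  refine funext fun a => hcompat (b a) (hle.elim (fun hle => ?_) fun hle => ?_)
  · exact heq hle (hP.trans hP'.symm) a
  · exact (heq hle (hP'.trans hP.symm) a).symm

end BlockPoint

section FourierCoeff

variable {p : ℕ} {ι κ : Type*} {M : ι → ℕ} [NeZero p] [Fintype ι] [DecidableEq ι] [Fintype κ]
  [DecidableEq κ]

/-- The Fourier coefficient at `χ` of the function that maps `g` to the value of `τ` at the point
assigned to `g`. -/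
def fourierCoeff (b : κ → ι) (χ : κ → ZMod p) {n : ℕ} (τ : (Fin n → ℝ) → ℝ)
    (w : JoinVertex M (ZMod p) → ℝ) : ℂ :=
  𝔼 g, pairing χ g * (τ (blockPoint b g n w) : ℂ)

lemma continuous_fourierCoeff (b : κ → ι) (χ : κ → ZMod p) {n : ℕ} {τ : (Fin n → ℝ) → ℝ}
    (hτ : Continuous τ) : Continuous (fourierCoeff (M := M) b χ τ) := by
  unfold fourierCoeff
  simp only [Fintype.expect_eq_sum_div_card]
  exact (continuous_finsetSum _ fun g _ => continuous_const.mul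
    (Complex.continuous_ofReal.comp (hτ.comp (continuous_blockPoint b g n)))).div_const _

lemma fourierCoeff_act (s : ι → ZMod p) (b : κ → ι) (χ : κ → ZMod p) {n : ℕ}
    (τ : (Fin n → ℝ) → ℝ) (w : JoinVertex M (ZMod p) → ℝ) :
    fourierCoeff b χ τ (act s w) = pairing χ (s ∘ b) * fourierCoeff b χ τ w := by
  rw [fourierCoeff, fourierCoeff, Finset.mul_expect]
  refine Fintype.expect_equiv (Equiv.subRight (s ∘ b)) _ _ fun g => ?_
  rw [blockPoint_act, Equiv.subRight_apply, ← mul_assoc, ← pairing_add_right, add_sub_cancel]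

lemma im_fourierCoeff [Fact p.Prime] (hp : p = 2) (b : κ → ι) (χ : κ → ZMod p) {n : ℕ}
    (τ : (Fin n → ℝ) → ℝ) (w : JoinVertex M (ZMod p) → ℝ) : (fourierCoeff b χ τ w).im = 0 := by
  rw [fourierCoeff, Fintype.expect_eq_sum_div_card, Complex.div_natCast_im, Complex.im_sum]
  simp [Complex.mul_im, im_pairing hp]

end FourierCoeff

section Direction

variable {p : ℕ} [Fact p.Prime] {ι : Type*} {M : ι → ℕ} [Fintype ι] [DecidableEq ι]

/-- The part of a weight at position `P` of the factor `j`, with each group element read as a root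
of unity. -/
def rootSum (j : ι) (P : ℕ) (w : JoinVertex M (ZMod p) → ℝ) : ℂ :=
  ∑ q : JoinVertex M (ZMod p) with (q.1 j : ℕ) = P, ZMod.stdAddChar (q.2 j) * (w q : ℂ)

lemma continuous_rootSum (j : ι) (P : ℕ) : Continuous (rootSum (M := M) (p := p) j P) :=
  continuous_finsetSum _ fun q _ =>
    continuous_const.mul (Complex.continuous_ofReal.comp (continuous_apply q))

lemma rootSum_act (s : ι → ZMod p) (j : ι) (P : ℕ) (w : JoinVertex M (ZMod p) → ℝ) :
    rootSum j P (act s w) = ZMod.stdAddChar (s j) * rootSum j P w := by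
  rw [rootSum, rootSum, Finset.mul_sum]
  refine Finset.sum_equiv ((Equiv.refl _).prodCongr (Equiv.subRight s)) (by simp) fun q _ => ?_
  rw [← mul_assoc, ← AddChar.map_add_eq_mul]
  exact congrArg (ZMod.stdAddChar · * _) (add_sub_cancel (s j) (q.2 j)).symm

lemma im_rootSum (hp : p = 2) (j : ι) (P : ℕ) (w : JoinVertex M (ZMod p) → ℝ) :
    (rootSum j P w).im = 0 := by
  simp [rootSum, Complex.mul_im, im_stdAddChar hp]

lemma exists_rootSum_eq {w : JoinVertex M (ZMod p) → ℝ} (hw : w ∈ joinProduct M (ZMod p)) (j : ι)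
    (P : ℕ) : ∃ γ : ZMod p, rootSum j P w =
      ZMod.stdAddChar γ * ((∑ q : JoinVertex M (ZMod p) with (q.1 j : ℕ) = P, w q : ℝ) : ℂ) := by
  obtain ⟨γ, hγ⟩ : ∃ γ, ∀ q, w q ≠ 0 → (q.1 j : ℕ) = P → q.2 j = γ := by
    by_cases h : ∃ q, w q ≠ 0 ∧ (q.1 j : ℕ) = P
    · obtain ⟨q, hq, hP⟩ := h
      exact ⟨q.2 j, fun q' hq' hP' => (hw.2 q' q hq' hq).2 j (Fin.ext (hP'.trans hP.symm))⟩
    · exact ⟨0, fun q hq hP => (h ⟨q, hq, hP⟩).elim⟩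
  refine ⟨γ, ?_⟩
  rw [rootSum, Complex.ofReal_sum, Finset.mul_sum]
  refine Finset.sum_congr rfl fun q hq => ?_
  obtain h0 | h0 := eq_or_ne (w q) 0
  · simp [h0]
  · rw [hγ q h0 (Finset.mem_filter.1 hq).2]

/-- The vector in `ℂ^d` determined by the factor `j`. Each of its coordinates uses as many
consecutive positions as a nontrivial character of `ℤ/p` has real dimensions. -/
def direction (j : ι) {d : ℕ} (w : JoinVertex M (ZMod p) → ℝ) : Fin d → ℂ := fun h =>
  ∑ i ∈ Finset.range (eulerDegree p), rootSum j (eulerDegree p * h + i) w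

lemma continuous_direction (j : ι) {d : ℕ} (h : Fin d) :
    Continuous fun w : JoinVertex M (ZMod p) → ℝ => direction j w h :=
  continuous_finsetSum _ fun _ _ => continuous_rootSum j _

lemma direction_act (s : ι → ZMod p) (j : ι) {d : ℕ} (w : JoinVertex M (ZMod p) → ℝ) (h : Fin d) :
    direction j (act s w) h = ZMod.stdAddChar (s j) * direction j w h := by
  simp only [direction, rootSum_act, Finset.mul_sum]

lemma im_direction (hp : p = 2) (j : ι) {d : ℕ} (w : JoinVertex M (ZMod p) → ℝ) (h : Fin d) :
    (direction j w h).im = 0 := by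
  simp [direction, im_rootSum hp]

lemma exists_direction_ne_zero {w : JoinVertex M (ZMod p) → ℝ} (hw : w ∈ joinProduct M (ZMod p))
    {j : ι} {d : ℕ} (hd : M j / eulerDegree p < d) : ∃ h : Fin d, direction j w h ≠ 0 := by
  obtain ⟨q, hq⟩ := exists_ne_zero_of_mem_joinProduct hw
  refine ⟨⟨q.1 j / eulerDegree p, (Nat.div_le_div_right (q.1 j).is_le).trans_lt hd⟩, fun h0 => ?_⟩
  choose γ hγ using exists_rootSum_eq hw j
  simp only [direction, hγ] at h0
  have hmass := eq_zero_of_sum_stdAddChar_mul_eq_zero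
    (fun i => Finset.sum_nonneg fun q _ => hw.1.1 q) h0 _ (Nat.mod_lt (q.1 j) eulerDegree_pos)
  rw [Nat.div_add_mod, Finset.sum_eq_zero_iff_of_nonneg fun q _ => hw.1.1 q] at hmass
  exact hq (hmass q (by simp))

end Direction

/-! ### The system of equations -/

section System

variable {m p d s : ℕ} [Fact p.Prime] {e n : Fin (m + 1) → ℕ} {T : Type*}

/-- The factors of the space of configurations: block `ℓ` has `e ℓ` factors, which encode `p ^ e ℓ`
points of the `ℓ`-th simplex, and each of `s` further factors encodes a normal direction. -/
abbrev Factor (e : Fin (m + 1) → ℕ) (s : ℕ) := (Σ ℓ, Fin (e ℓ)) ⊕ Fin s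

/-- The factors of block `ℓ`. -/
def blockFactor (e : Fin (m + 1) → ℕ) (s : ℕ) (ℓ : Fin (m + 1)) (a : Fin (e ℓ)) : Factor e s :=
  .inl ⟨ℓ, a⟩

lemma blockFactor_injective (ℓ : Fin (m + 1)) : (blockFactor e s ℓ).Injective := fun a b h => by
  simpa [blockFactor] using h

/-- The equations for a configuration. Each function `τ ℓ c` has to be constant on the points of
block `ℓ` (`value`); the scalar products of a normal direction with the images of these points have
to be constant (`normal`) and to have the same average in all blocks (`average`); and the normal
directions have to be orthogonal for the Hermitian and, if they are not real, for the bilinear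
product. -/
inductive Equation (p : ℕ) [Fact p.Prime] (e : Fin (m + 1) → ℕ) (s : ℕ) (T : Type*)
  | value (ℓ : Fin (m + 1)) (χ : Fin (e ℓ) → ZMod p) (hχ : IsHalf χ) (c : T)
  | normal (ℓ : Fin (m + 1)) (χ : Fin (e ℓ) → ZMod p) (hχ : χ ≠ 0) (i : Fin s)
  | average (i : Fin s) (l : Fin m)
  | hermitian (i j : Fin s) (hij : i < j)
  | bilinear (hp : p ≠ 2) (i j : Fin s) (hij : i ≤ j)

namespace Equation

/-- The left-hand side of an equation, for families `τ` of real functions and `F` of maps to `ℝ^d`,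
given by coordinates. -/
def lhs {M : Factor e s → ℕ} (τ : ∀ ℓ, T → (Fin (n ℓ) → ℝ) → ℝ)
    (F : ∀ ℓ, Fin d → (Fin (n ℓ) → ℝ) → ℝ) :
    Equation p e s T → (JoinVertex M (ZMod p) → ℝ) → ℂ
  | value ℓ χ _ c, w => fourierCoeff (blockFactor e s ℓ) χ (τ ℓ c) w
  | normal ℓ χ _ i, w =>
    ∑ h, direction (.inr i) w h * fourierCoeff (blockFactor e s ℓ) χ (F ℓ h) w
  | average i l, w => ∑ h, direction (.inr i) w h *
    (fourierCoeff (blockFactor e s l.succ) 0 (F l.succ h) w -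
      fourierCoeff (blockFactor e s 0) 0 (F 0 h) w)
  | hermitian i j _, w =>
    ∑ h : Fin d, direction (.inr i) w h * (starRingEnd ℂ) (direction (.inr j) w h)
  | bilinear _ i j _, w => ∑ h : Fin d, direction (.inr i) w h * direction (.inr j) w h

/-- The character by which the left-hand side of an equation transforms. -/
def character : Equation p e s T → Factor e s → ZMod p
  | value ℓ χ _ _ => Function.extend (blockFactor e s ℓ) χ 0
  | normal ℓ χ _ i => Function.extend (blockFactor e s ℓ) χ 0 + Pi.single (.inr i) 1
  | average i _ => Pi.single (.inr i) 1
  | hermitian i j _ => Pi.single (.inr i) 1 - Pi.single (.inr j) 1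
  | bilinear _ i j _ => Pi.single (.inr i) 1 + Pi.single (.inr j) 1

/-- The factor of lowest rank on which the character of an equation is nontrivial. -/
def leadingFactor : Equation p e s T → Factor e s
  | value ℓ χ hχ _ => blockFactor e s ℓ (lead χ hχ.1)
  | normal ℓ χ hχ _ => blockFactor e s ℓ (lead χ hχ)
  | average i _ => .inr i
  | hermitian i _ _ => .inr i
  | bilinear _ i _ _ => .inr i

end Equation

open Equation

lemma extend_dotProduct {R κ ι : Type*} [NonUnitalNonAssocSemiring R] [Fintype κ] [Fintype ι]
    {b : κ → ι} (hb : b.Injective) (χ : κ → R) (σ : ι → R) :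
    Function.extend b χ 0 ⬝ᵥ σ = χ ⬝ᵥ (σ ∘ b) := by
  refine (Fintype.sum_of_injective b hb _ _ (fun j hj => ?_) fun a => ?_).symm
  · rw [Function.extend_apply' _ _ _ hj, Pi.zero_apply, zero_mul]
  · rw [hb.extend_apply, Function.comp_apply]

lemma Equation.lhs_act {M : Factor e s → ℕ} (τ : ∀ ℓ, T → (Fin (n ℓ) → ℝ) → ℝ)
    (F : ∀ ℓ, Fin d → (Fin (n ℓ) → ℝ) → ℝ) (k : Equation p e s T) (σ : Factor e s → ZMod p)
    (w : JoinVertex M (ZMod p) → ℝ) :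
    lhs τ F k (act σ w) = ZMod.stdAddChar (character k ⬝ᵥ σ) * lhs τ F k w := by
  cases k <;> simp only [lhs, character, sub_eq_add_neg, add_dotProduct, neg_dotProduct,
    single_one_dotProduct, extend_dotProduct (blockFactor_injective _), fourierCoeff_act,
    direction_act, pairing, zero_dotProduct, AddChar.map_add_eq_mul, AddChar.map_neg_eq_conj,
    AddChar.map_zero_eq_one, map_mul, Finset.mul_sum]
  all_goals exact Finset.sum_congr rfl fun h _ => by ring

lemma Equation.continuous_lhs {M : Factor e s → ℕ} {τ : ∀ ℓ, T → (Fin (n ℓ) → ℝ) → ℝ}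
    (hτ : ∀ ℓ c, Continuous (τ ℓ c)) {F : ∀ ℓ, Fin d → (Fin (n ℓ) → ℝ) → ℝ}
    (hF : ∀ ℓ h, Continuous (F ℓ h)) (k : Equation p e s T) :
    Continuous (lhs (M := M) τ F k) := by
  have hdir (i : Fin s) (h : Fin d) := continuous_direction (p := p) (M := M) (.inr i) h
  have hcoeff (ℓ) (χ : Fin (e ℓ) → ZMod p) (h) :=
    continuous_fourierCoeff (M := M) (blockFactor e s ℓ) χ (hF ℓ h)
  cases k with
  | value ℓ χ _ c => exact continuous_fourierCoeff _ χ (hτ ℓ c)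
  | normal ℓ χ _ i => exact continuous_finsetSum _ fun h _ => (hdir i h).mul (hcoeff ℓ χ h)
  | average i l =>
    exact continuous_finsetSum _ fun h _ => (hdir i h).mul ((hcoeff _ 0 h).sub (hcoeff 0 0 h))
  | hermitian i j =>
    exact continuous_finsetSum _ fun h _ =>
      (hdir i h).mul (Complex.continuous_conj.comp (hdir j h))
  | bilinear _ i j => exact continuous_finsetSum _ fun h _ => (hdir i h).mul (hdir j h)

lemma Equation.im_lhs (hp : p = 2) {M : Factor e s → ℕ} (τ : ∀ ℓ, T → (Fin (n ℓ) → ℝ) → ℝ)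
    (F : ∀ ℓ, Fin d → (Fin (n ℓ) → ℝ) → ℝ) (k : Equation p e s T)
    (w : JoinVertex M (ZMod p) → ℝ) : (lhs τ F k w).im = 0 := by
  cases k <;> simp [lhs, Complex.mul_im, im_fourierCoeff hp, im_direction hp]

/-! ### Triangularity and dimension counts -/

lemma Equation.character_leadingFactor_ne_zero (k : Equation p e s T) :
    character k (leadingFactor k) ≠ 0 := by
  cases k with
  | value ℓ χ hχ c =>
    rw [character, leadingFactor, (blockFactor_injective ℓ).extend_apply]
    exact apply_lead_ne_zero χ hχ.1
  | normal ℓ χ hχ i =>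
    rw [character, leadingFactor, Pi.add_apply, (blockFactor_injective ℓ).extend_apply,
      Pi.single_eq_of_ne (i' := blockFactor e s ℓ _) Sum.inl_ne_inr, add_zero]
    exact apply_lead_ne_zero χ hχ
  | average i l => simp [character, leadingFactor]
  | hermitian i j hij => simp [character, leadingFactor, hij.ne]
  | bilinear hp i j hij =>
    obtain rfl | hij := hij.eq_or_lt
    · simpa [character, leadingFactor, one_add_one_eq_two] using two_ne_zero_of_ne_two hp
    · simp [character, leadingFactor, hij.ne]

/-- The position of a factor in the order that makes the characters of the equations triangular. -/
def factorRank (e : Fin (m + 1) → ℕ) (s : ℕ) : Factor e s → ℕ :=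
  Sum.elim (fun q => q.2) fun i => (∑ ℓ, e ℓ) + i

lemma eq_lead_or_factorRank_lt {ℓ : Fin (m + 1)} {χ : Fin (e ℓ) → ZMod p} (hχ : χ ≠ 0)
    {j : Factor e s} (hj : Function.extend (blockFactor e s ℓ) χ 0 j ≠ 0) :
    j = blockFactor e s ℓ (lead χ hχ) ∨
      factorRank e s (blockFactor e s ℓ (lead χ hχ)) < factorRank e s j := by
  by_cases h : ∃ a, blockFactor e s ℓ a = j
  · obtain ⟨a, rfl⟩ := h
    rw [(blockFactor_injective ℓ).extend_apply] at hj
    exact (lead_le hχ hj).eq_or_lt.imp (fun h => congrArg _ h.symm) id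
  · exact (hj (Function.extend_apply' _ _ _ h)).elim

lemma factorRank_blockFactor_lt (ℓ : Fin (m + 1)) (a : Fin (e ℓ)) (i : Fin s) :
    factorRank e s (blockFactor e s ℓ a) < factorRank e s (.inr i) :=
  a.2.trans_le ((Finset.single_le_sum_of_canonicallyOrdered (Finset.mem_univ ℓ)).trans
    (Nat.le_add_right _ _))

lemma Equation.eq_leadingFactor_or_factorRank_lt (k : Equation p e s T) {j : Factor e s}
    (hj : character k j ≠ 0) :
    j = leadingFactor k ∨ factorRank e s (leadingFactor k) < factorRank e s j := by
  have single_ne {i : Fin s} (h : Pi.single (M := fun _ => ZMod p) (.inr i) 1 j ≠ 0) :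
      j = .inr i := by
    by_contra hne
    exact h (Pi.single_eq_of_ne hne _)
  have le {i i' : Fin s} (hi : i ≤ i') :
      (Sum.inr i' : Factor e s) = .inr i ∨ factorRank e s (.inr i) < factorRank e s (.inr i') :=
    hi.eq_or_lt.imp (fun h => congrArg _ h.symm) (Nat.add_lt_add_left · _)
  have or_of_add {x y : ZMod p} (h : x + y ≠ 0) : x ≠ 0 ∨ y ≠ 0 := by
    by_contra! h0
    simp [h0] at h
  cases k with
  | value ℓ χ hχ c => exact eq_lead_or_factorRank_lt hχ.1 hj
  | normal ℓ χ hχ i =>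
    obtain h | h := or_of_add hj
    · exact eq_lead_or_factorRank_lt hχ h
    · rw [single_ne h]
      exact .inr (factorRank_blockFactor_lt ℓ _ i)
  | average i l => exact .inl (single_ne hj)
  | hermitian i i' hi =>
    obtain h | h := or_of_add ((sub_eq_add_neg _ _).symm.trans_ne hj)
    · exact .inl (single_ne h)
    · rw [single_ne (neg_ne_zero.1 h)]
      exact le hi.le
  | bilinear _ i i' hi =>
    obtain h | h := or_of_add hj
    · exact .inl (single_ne h)
    · rw [single_ne h]
      exact le hi

instance [Finite T] : Finite (Equation p e s T) := by
  let f : ((Σ ℓ, {χ : Fin (e ℓ) → ZMod p // IsHalf χ} × T) ⊕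
      (Σ ℓ, {χ : Fin (e ℓ) → ZMod p // χ ≠ 0} × Fin s)) ⊕ (Fin s × Fin m) ⊕
      {x : Fin s × Fin s // x.1 < x.2} ⊕ {x : Fin s × Fin s // p ≠ 2 ∧ x.1 ≤ x.2} →
      Equation p e s T :=
    Sum.elim (Sum.elim (fun x => value x.1 x.2.1 x.2.1.2 x.2.2)
        fun x => normal x.1 x.2.1 x.2.1.2 x.2.2)
      (Sum.elim (fun x => average x.1 x.2)
        (Sum.elim (fun x => hermitian x.1.1 x.1.2 x.2)
          fun x => bilinear x.2.1 x.1.1 x.1.2 x.2.2))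
  refine Finite.of_surjective f ?_
  rintro (⟨ℓ, χ, hχ, c⟩ | ⟨ℓ, χ, hχ, i⟩ | ⟨i, l⟩ | ⟨i, j, hij⟩ | ⟨hp, i, j, hij⟩)
  exacts [⟨.inl (.inl ⟨ℓ, ⟨χ, hχ⟩, c⟩), rfl⟩, ⟨.inl (.inr ⟨ℓ, ⟨χ, hχ⟩, i⟩), rfl⟩,
    ⟨.inr (.inl (i, l)), rfl⟩, ⟨.inr (.inr (.inl ⟨(i, j), hij⟩)), rfl⟩,
    ⟨.inr (.inr (.inr ⟨(i, j), hp, hij⟩)), rfl⟩]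

/-- The top position of a factor, in the sense of `JoinVertex`: the number of real dimensions of
the equations with this leading factor. -/
def topPosition (p : ℕ) [Fact p.Prime] (e : Fin (m + 1) → ℕ) (s : ℕ) (T : Type*)
    (j : Factor e s) : ℕ :=
  eulerDegree p * Nat.card {k : Equation p e s T // leadingFactor k = j}

lemma sum_topPosition_le [Fintype T] (ℓ : Fin (m + 1)) :
    ∑ a, topPosition p e s T (blockFactor e s ℓ a) ≤
      (p ^ e ℓ - 1) * (eulerDegree p * s + Fintype.card T) := by
  classical
  let f : {χ : Fin (e ℓ) → ZMod p // IsHalf χ} × T ⊕ {χ : Fin (e ℓ) → ZMod p // χ ≠ 0} × Fin s →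
      Σ a, {k : Equation p e s T // leadingFactor k = blockFactor e s ℓ a} :=
    Sum.elim (fun x => ⟨_, value ℓ x.1 x.1.2 x.2, rfl⟩) fun x => ⟨_, normal ℓ x.1 x.1.2 x.2, rfl⟩
  have hf : f.Surjective := by
    rintro ⟨a, k, hk⟩
    cases k with
    | value ℓ' χ hχ c =>
      cases hk
      exact ⟨.inl (⟨χ, hχ⟩, c), rfl⟩
    | normal ℓ' χ hχ i =>
      cases hk
      exact ⟨.inr (⟨χ, hχ⟩, i), rfl⟩
    | _ => cases hk
  have hle := Nat.card_le_card_of_surjective f hf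
  have hhalf := card_isHalf_le (p := p) (κ := Fin (e ℓ))
  simp only [Nat.card_sigma, Nat.card_eq_fintype_card, Fintype.card_sum, Fintype.card_prod,
    Fintype.card_fin] at hle hhalf
  have hcard : Fintype.card {χ : Fin (e ℓ) → ZMod p // χ ≠ 0} = p ^ e ℓ - 1 := by simp
  simp only [topPosition, ← Finset.mul_sum]
  calc _ ≤ eulerDegree p * (Fintype.card {χ : Fin (e ℓ) → ZMod p // IsHalf χ} * Fintype.card T +
        (p ^ e ℓ - 1) * s) := by rw [← hcard]; gcongr
    _ = eulerDegree p * Fintype.card {χ : Fin (e ℓ) → ZMod p // IsHalf χ} * Fintype.card T +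
        (p ^ e ℓ - 1) * (eulerDegree p * s) := by ring
    _ ≤ (p ^ e ℓ - 1) * Fintype.card T + (p ^ e ℓ - 1) * (eulerDegree p * s) := by gcongr
    _ = _ := by ring

lemma topPosition_inr_div_lt (i : Fin s) :
    topPosition p e s T (.inr i) / eulerDegree p < m + eulerDegree p * s := by
  let f : Fin m ⊕ {j : Fin s // i < j} ⊕ {j : Fin s // p ≠ 2 ∧ i ≤ j} →
      {k : Equation p e s T // leadingFactor k = .inr i} :=
    Sum.elim (fun l => ⟨average i l, rfl⟩)
      (Sum.elim (fun j => ⟨hermitian i j j.2, rfl⟩) fun j => ⟨bilinear j.2.1 i j j.2.2, rfl⟩)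
  have hf : f.Surjective := by
    rintro ⟨k, hk⟩
    cases k with
    | average i' l =>
      cases hk
      exact ⟨.inl l, rfl⟩
    | hermitian i' j hij =>
      cases hk
      exact ⟨.inr (.inl ⟨j, hij⟩), rfl⟩
    | bilinear hp i' j hij =>
      cases hk
      exact ⟨.inr (.inr ⟨j, hp, hij⟩), rfl⟩
    | _ => cases hk
  have hle := Nat.card_le_card_of_surjective f hf
  have hherm : Fintype.card {j : Fin s // i < j} < s := by
    simpa using Fintype.card_subtype_lt (p := fun j : Fin s => i < j) (lt_irrefl i)
  have hbil : s + Fintype.card {j : Fin s // p ≠ 2 ∧ i ≤ j} ≤ eulerDegree p * s := by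
    by_cases hp : p = 2
    · simp [hp, eulerDegree]
    · simpa [hp, eulerDegree, two_mul] using
        Fintype.card_subtype_le (fun j : Fin s => i ≤ j)
  rw [topPosition, Nat.mul_div_cancel_left _ eulerDegree_pos]
  simp only [Nat.card_eq_fintype_card (α := _ ⊕ _), Fintype.card_sum, Fintype.card_fin] at hle
  omega

end System

/-! ### Solutions of the system -/

section Solution

variable {m p d s : ℕ} {e n : Fin (m + 1) → ℕ} {T : Type*}

/-- Nonnegative vectors with disjoint supports, indexed by `G`, whose total mass is `1`: points of a
simplex in disjoint faces, up to scaling. -/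
structure DisjointPoints (G : Type*) [Fintype G] (n : ℕ) where
  point : G → Fin n → ℝ
  nonneg : ∀ g P, 0 ≤ point g P
  sum_eq_one : ∑ g, ∑ P, point g P = 1
  eq_of_ne_zero : ∀ {g g' P}, point g P ≠ 0 → point g' P ≠ 0 → g = g'

/-- Nonzero vectors, real for `p = 2`, that are orthogonal for the Hermitian product. For odd `p`
they are also orthogonal, and isotropic, for the bilinear product, so that their real and imaginary
parts are `eulerDegree p * s` orthogonal real vectors. -/
structure NormalFrame (p s d : ℕ) where
  vec : Fin s → Fin d → ℂ
  ne_zero : ∀ i, ∃ h, vec i h ≠ 0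
  im_eq_zero : p = 2 → ∀ i h, (vec i h).im = 0
  hermitian : ∀ i j, i < j → ∑ h, vec i h * (starRingEnd ℂ) (vec j h) = 0
  bilinear : p ≠ 2 → ∀ i j, i ≤ j → ∑ h, vec i h * vec j h = 0

variable [Fact p.Prime]

lemma sum_mul_eq_of_fourierCoeff {ι κ : Type*} [Fintype ι] [DecidableEq ι] [Fintype κ]
    [DecidableEq κ] {M : ι → ℕ} {w : JoinVertex M (ZMod p) → ℝ} {b : κ → ι} {n : ℕ}
    {v : Fin d → ℂ} {F : Fin d → (Fin n → ℝ) → ℝ}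
    (h : ∀ χ ≠ 0, ∑ h, v h * fourierCoeff b χ (F h) w = 0) (g : κ → ZMod p) :
    ∑ h, v h * (F h (blockPoint b g n w) : ℂ) = ∑ h, v h * fourierCoeff b 0 (F h) w := by
  have hcoeff (χ : κ → ZMod p) :
      𝔼 g, pairing χ g * ∑ h, v h * (F h (blockPoint b g n w) : ℂ) =
        ∑ h, v h * fourierCoeff b χ (F h) w := by
    simp only [fourierCoeff, Finset.mul_sum, Finset.mul_expect, Finset.expect_sum_comm]
    exact Finset.sum_congr rfl fun h _ => Finset.expect_congr rfl fun g _ => mul_left_comm _ _ _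
  rw [eq_expect_of_fourier_eq_zero (fun χ hχ => (hcoeff χ).trans (h χ hχ)) g, ← hcoeff 0]
  simp only [pairing_zero_left, one_mul]

theorem exists_disjointPoints_normalFrame [Fintype T]
    (hn : ∀ ℓ, (p ^ e ℓ - 1) * (eulerDegree p * s + Fintype.card T) < n ℓ)
    (hd : m + eulerDegree p * s ≤ d)
    {τ : ∀ ℓ, T → (Fin (n ℓ) → ℝ) → ℝ} (hτ : ∀ ℓ c, Continuous (τ ℓ c))
    {F : ∀ ℓ, Fin d → (Fin (n ℓ) → ℝ) → ℝ} (hF : ∀ ℓ h, Continuous (F ℓ h)) :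
    ∃ (Λ : ∀ ℓ, DisjointPoints (Fin (e ℓ) → ZMod p) (n ℓ)) (W : NormalFrame p s d),
      (∀ ℓ c g g', τ ℓ c ((Λ ℓ).point g) = τ ℓ c ((Λ ℓ).point g')) ∧
      ∀ i ℓ g ℓ' g', ∑ h, W.vec i h * (F ℓ h ((Λ ℓ).point g) : ℂ) =
        ∑ h, W.vec i h * (F ℓ' h ((Λ ℓ').point g') : ℂ) := by
  classical
  let := Fintype.ofFinite (Equation p e s T)
  obtain ⟨w, hw, hz⟩ := exists_common_zero (M := topPosition p e s T) (rk := factorRank e s)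
    Equation.character_leadingFactor_ne_zero
    (fun k _ => k.eq_leadingFactor_or_factorRank_lt)
    (fun j => by rw [topPosition, Nat.card_eq_fintype_card, Fintype.card_subtype])
    (fun k => (k.continuous_lhs hτ hF).continuousOn)
    (fun hp k w _ => k.im_lhs hp τ F w) (fun k σ w _ => k.lhs_act τ F σ w)
  have hmean (ℓ i) (g : Fin (e ℓ) → ZMod p) :
      ∑ h, direction (.inr i) w h * (F ℓ h (blockPoint (blockFactor e s ℓ) g (n ℓ) w) : ℂ) =
        ∑ h, direction (.inr i) w h * fourierCoeff (blockFactor e s 0) 0 (F 0 h) w := by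
    rw [sum_mul_eq_of_fourierCoeff fun χ hχ => hz (.normal ℓ χ hχ i)]
    cases ℓ using Fin.cases with
    | zero => rfl
    | succ l =>
      rw [← sub_eq_zero, ← Finset.sum_sub_distrib]
      simpa only [Equation.lhs, mul_sub] using hz (.average i l)
  let Λ (ℓ) : DisjointPoints (Fin (e ℓ) → ZMod p) (n ℓ) :=
    { point := fun g => blockPoint (blockFactor e s ℓ) g (n ℓ) w
      nonneg := fun g => blockPoint_nonneg hw _ g _
      sum_eq_one := sum_blockPoint hw _ ((sum_topPosition_le ℓ).trans_lt (hn ℓ))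
      eq_of_ne_zero := eq_of_blockPoint_ne_zero hw }
  let W : NormalFrame p s d :=
    { vec := fun i => direction (.inr i) w
      ne_zero := fun i => exists_direction_ne_zero hw ((topPosition_inr_div_lt i).trans_le hd)
      im_eq_zero := fun hp i => im_direction hp _ w
      hermitian := fun i j hij => by simpa only [Equation.lhs] using hz (.hermitian i j hij)
      bilinear := fun hp i j hij => by simpa only [Equation.lhs] using hz (.bilinear hp i j hij) }
  exact ⟨Λ, W,
    fun ℓ c => eq_of_fourier_eq_zero_of_isHalf fun χ hχ => hz (.value ℓ χ hχ c),
    fun i ℓ g ℓ' g' => (hmean ℓ i g).trans (hmean ℓ' i g').symm⟩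

end Solution

/-! ### The affine subspace orthogonal to the normal directions -/

section Flat

lemma exists_affineSubspace_of_orthogonal {E κ X : Type*} [NormedAddCommGroup E]
    [InnerProductSpace ℝ E] [FiniteDimensional ℝ E] [Fintype κ] [Nonempty X] {m : ℕ} {b : κ → E}
    (hb : ∀ i, b i ≠ 0) (horth : Pairwise fun i j => inner ℝ (b i) (b j) = 0)
    (hcard : Fintype.card κ + m = Module.finrank ℝ E) {P : X → E}
    (hP : ∀ i x y, inner ℝ (b i) (P x) = inner ℝ (b i) (P y)) :
    ∃ L : AffineSubspace ℝ E, (L : Set E).Nonempty ∧ Module.finrank ℝ L.direction = m ∧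
      ∀ x, P x ∈ L := by
  obtain ⟨x₀⟩ := ‹Nonempty X›
  refine ⟨AffineSubspace.mk' (P x₀) (Submodule.span ℝ (Set.range b))ᗮ,
    ⟨P x₀, AffineSubspace.self_mem_mk' _ _⟩, ?_, fun x => ?_⟩
  · have hspan := finrank_span_eq_card (linearIndependent_of_ne_zero_of_inner_eq_zero hb horth)
    have hperp := Submodule.finrank_add_finrank_orthogonal (Submodule.span ℝ (Set.range b))
    rw [AffineSubspace.direction_mk']
    omega
  · rw [AffineSubspace.mem_mk', vsub_eq_sub, Submodule.mem_orthogonal']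
    refine fun u hu =>
      (Submodule.span_le (p := LinearMap.ker (innerₛₗ ℝ (P x - P x₀)))).2 ?_ hu
    rintro _ ⟨i, rfl⟩
    simp [real_inner_comm, hP i x x₀]

variable {d : ℕ}

/-- The real part (`false`) or the imaginary part (`true`) of a complex vector. -/
def realComponent (v : Fin d → ℂ) (b : Bool) : EuclideanSpace ℝ (Fin d) :=
  WithLp.toLp 2 fun h => bif b then (v h).im else (v h).re

lemma inner_realComponent (v w : Fin d → ℂ) (b c : Bool) :
    inner ℝ (realComponent v b) (realComponent w c) =
      ∑ h, (bif b then (v h).im else (v h).re) * bif c then (w h).im else (w h).re := by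
  simp [realComponent, PiLp.inner_apply, mul_comm]

lemma inner_realComponent_eq {v : Fin d → ℂ} {x y : EuclideanSpace ℝ (Fin d)}
    (h : ∑ i, v i * (x i : ℂ) = ∑ i, v i * (y i : ℂ)) (b : Bool) :
    inner ℝ (realComponent v b) x = inner ℝ (realComponent v b) y := by
  have hre := congrArg Complex.re h
  have him := congrArg Complex.im h
  simp only [Complex.re_sum, Complex.im_sum, Complex.re_mul_ofReal, Complex.im_mul_ofReal]
    at hre him
  cases b <;> simpa [realComponent, PiLp.inner_apply, mul_comm]

-- The Hermitian and the bilinear product differ in the signs of the terms that involve imaginary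
-- parts.
lemma inner_realComponent_eq_zero {v w : Fin d → ℂ} (hherm : ∑ h, v h * (starRingEnd ℂ) (w h) = 0)
    (hbil : ∑ h, v h * w h = 0) (b c : Bool) :
    inner ℝ (realComponent v b) (realComponent w c) = 0 := by
  rw [Complex.ext_iff] at hherm hbil
  simp only [Complex.re_sum, Complex.im_sum, Complex.mul_re, Complex.mul_im, Complex.conj_re,
    Complex.conj_im, Finset.sum_add_distrib, Finset.sum_sub_distrib, mul_neg,
    Finset.sum_neg_distrib, Complex.zero_re, Complex.zero_im] at hherm hbil
  cases b <;> cases c <;> simp only [inner_realComponent, cond_true, cond_false] <;> linarith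

lemma inner_realComponent_self_of_isotropic {v : Fin d → ℂ} (hv : ∑ h, v h * v h = 0) :
    inner ℝ (realComponent v false) (realComponent v true) = 0 ∧
      inner ℝ (realComponent v false) (realComponent v false) =
        inner ℝ (realComponent v true) (realComponent v true) := by
  rw [Complex.ext_iff] at hv
  simp only [Complex.re_sum, Complex.im_sum, Complex.mul_re, Complex.mul_im,
    Finset.sum_add_distrib, Finset.sum_sub_distrib, Complex.zero_re, Complex.zero_im] at hv
  simp only [inner_realComponent, cond_true, cond_false]
  have hcomm := Finset.sum_congr rfl fun h (_ : h ∈ Finset.univ) => mul_comm (v h).im (v h).re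
  constructor <;> linarith

lemma realComponent_ne_zero_of_real {v : Fin d → ℂ} (hv : ∃ h, v h ≠ 0) (hre : ∀ h, (v h).im = 0) :
    realComponent v false ≠ 0 := by
  obtain ⟨h, hh⟩ := hv
  exact fun h0 => hh (Complex.ext (congrArg (· h) h0) (hre h))

lemma realComponent_ne_zero_of_isotropic {v : Fin d → ℂ} (hv : ∃ h, v h ≠ 0)
    (hiso : ∑ h, v h * v h = 0) (b : Bool) : realComponent v b ≠ 0 := by
  intro h0
  have hnorm := (inner_realComponent_self_of_isotropic hiso).2
  have hzero : ∀ c, realComponent v c = 0 := by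
    cases b <;> rw [h0, inner_zero_left] at hnorm <;> rintro (_ | _)
    exacts [h0, inner_self_eq_zero.1 hnorm.symm, inner_self_eq_zero.1 hnorm, h0]
  obtain ⟨h, hh⟩ := hv
  exact hh (Complex.ext (congrArg (· h) (hzero false)) (congrArg (· h) (hzero true)))

variable {p s m : ℕ}

lemma NormalFrame.hermitian_of_ne (W : NormalFrame p s d) {i j : Fin s} (hij : i ≠ j) :
    ∑ h, W.vec i h * (starRingEnd ℂ) (W.vec j h) = 0 := by
  obtain hij | hij := hij.lt_or_gt
  · exact W.hermitian i j hij
  · simpa [mul_comm] using congrArg (starRingEnd ℂ) (W.hermitian j i hij)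

lemma NormalFrame.bilinear_of_ne_two (W : NormalFrame p s d) (hp : p ≠ 2) (i j : Fin s) :
    ∑ h, W.vec i h * W.vec j h = 0 := by
  obtain hij | hij := le_total i j
  · exact W.bilinear hp i j hij
  · simpa only [mul_comm] using W.bilinear hp j i hij

theorem NormalFrame.exists_affineSubspace (W : NormalFrame p s d)
    (hd : eulerDegree p * s + m = d) {X : Type*} [Nonempty X] {P : X → EuclideanSpace ℝ (Fin d)}
    (hP : ∀ i x y, ∑ h, W.vec i h * (P x h : ℂ) = ∑ h, W.vec i h * (P y h : ℂ)) :
    ∃ L : AffineSubspace ℝ (EuclideanSpace ℝ (Fin d)),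
      (L : Set (EuclideanSpace ℝ (Fin d))).Nonempty ∧ Module.finrank ℝ L.direction = m ∧
      ∀ x, P x ∈ L := by
  by_cases hp : p = 2
  · refine exists_affineSubspace_of_orthogonal (b := fun i : Fin s => realComponent (W.vec i) false)
      (fun i => realComponent_ne_zero_of_real (W.ne_zero i) (W.im_eq_zero hp i))
      (fun i j hij => ?_) ?_ fun i x y => inner_realComponent_eq (hP i x y) false
    · simpa [inner_realComponent, W.im_eq_zero hp] using congrArg Complex.re (W.hermitian_of_ne hij)
    · simpa [eulerDegree, hp] using hd
  · have hbil := W.bilinear_of_ne_two hp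
    refine exists_affineSubspace_of_orthogonal
      (b := fun x : Fin s × Bool => realComponent (W.vec x.1) x.2)
      (fun x => realComponent_ne_zero_of_isotropic (W.ne_zero x.1) (hbil x.1 x.1) x.2) ?_ ?_
      fun x y z => inner_realComponent_eq (hP x.1 y z) x.2
    · rintro ⟨i, b⟩ ⟨j, c⟩ hne
      obtain rfl | hij := eq_or_ne i j
      · have horth := (inner_realComponent_self_of_isotropic (hbil i i)).1
        cases b <;> cases c
        exacts [(hne rfl).elim, horth, (real_inner_comm _ _).trans horth, (hne rfl).elim]
      · exact inner_realComponent_eq_zero (W.hermitian_of_ne hij) (hbil i j) b c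
    · simpa [eulerDegree, hp, mul_comm] using hd

end Flat

/-! ### Small faces and the main theorem -/

section Faces

lemma eval_esymm_eq_zero_iff {σ : Type*} [Fintype σ] {x : σ → ℝ} (hx : ∀ i, 0 ≤ x i) {k : ℕ} :
    (MvPolynomial.esymm σ ℝ k).eval x = 0 ↔ (Finset.univ.filter (x · ≠ 0)).card < k := by
  simp only [MvPolynomial.esymm, map_sum, map_prod, MvPolynomial.eval_X]
  rw [Finset.sum_eq_zero_iff_of_nonneg fun S _ => Finset.prod_nonneg fun i _ => hx i]
  refine ⟨fun h => ?_, fun h S hS => ?_⟩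
  · by_contra! hk
    obtain ⟨S, hS, hcard⟩ := Finset.exists_subset_card_eq hk
    refine Finset.prod_ne_zero_iff.2 (fun i hi => (Finset.mem_filter.1 (hS hi)).2)
      (h S (Finset.mem_powersetCard_univ.2 hcard))
  · by_contra hS0
    rw [← Finset.mem_powersetCard_univ.1 hS] at h
    exact h.not_ge (Finset.card_le_card fun i hi =>
      Finset.mem_filter.2 ⟨Finset.mem_univ i, Finset.prod_ne_zero_iff.1 hS0 i hi⟩)

namespace DisjointPoints

variable {G : Type*} [Fintype G] {n : ℕ} (Λ : DisjointPoints G n)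

/-- The vertices of the smallest face that contains a point, up to scaling. -/
def face (g : G) : Finset (Fin n) :=
  Finset.univ.filter (Λ.point g · ≠ 0)

lemma disjoint_face {g g' : G} (hg : g ≠ g') : Disjoint (Λ.face g) (Λ.face g') :=
  Finset.disjoint_left.2 fun _ hP hP' =>
    hg (Λ.eq_of_ne_zero (Finset.mem_filter.1 hP).2 (Finset.mem_filter.1 hP').2)

-- All faces have at least `k` vertices or none of them has.
lemma card_face_lt {k : ℕ} (hn : n < Fintype.card G * k)
    (hΛ : ∀ g g', (MvPolynomial.esymm (Fin n) ℝ k).eval (Λ.point g) =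
      (MvPolynomial.esymm (Fin n) ℝ k).eval (Λ.point g')) (g : G) : (Λ.face g).card < k := by
  by_contra hg
  have hk (g' : G) : k ≤ (Λ.face g').card := by
    rw [← not_lt, face, ← eval_esymm_eq_zero_iff (Λ.nonneg g'), hΛ g' g,
      eval_esymm_eq_zero_iff (Λ.nonneg g)]
    exact hg
  refine hn.not_ge ?_
  calc Fintype.card G * k ≤ ∑ g', (Λ.face g').card := by
        simpa using Finset.card_nsmul_le_sum Finset.univ _ k fun g' _ => hk g'
    _ = (Finset.univ.disjiUnion Λ.face fun _ _ _ _ h => Λ.disjoint_face h).card :=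
        (Finset.card_disjiUnion _ _ _).symm
    _ ≤ n := by simpa using Finset.card_le_univ (Finset.univ.disjiUnion Λ.face _)

lemma card_smul_mem_simpFace {N : ℕ} (Λ : DisjointPoints G (N + 1))
    (hΛ : ∀ g g', ∑ P, Λ.point g P = ∑ P, Λ.point g' P) (g : G) :
    WithLp.toLp 2 ((Fintype.card G : ℝ) • Λ.point g) ∈ simpFace N (Λ.face g) := by
  refine ⟨⟨fun P => mul_nonneg (Nat.cast_nonneg _) (Λ.nonneg g P), ?_⟩, fun P hP =>
    Finset.mem_filter.2 ⟨Finset.mem_univ P, right_ne_zero_of_mul hP⟩⟩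
  calc ∑ P, Fintype.card G * Λ.point g P = ∑ g', ∑ P, Λ.point g' P := by
        rw [← Finset.mul_sum, Finset.sum_congr rfl fun g' _ => hΛ g' g]
        simp
    _ = 1 := Λ.sum_eq_one

end DisjointPoints

variable {N : ℕ}

lemma nonempty_of_mem_simpFace {S : Finset (Fin (N + 1))} {x : EuclideanSpace ℝ (Fin (N + 1))}
    (hx : x ∈ simpFace N S) : S.Nonempty := by
  obtain ⟨i, -, hi⟩ := Finset.exists_ne_zero_of_sum_ne_zero (hx.1.2.trans_ne one_ne_zero)
  exact ⟨i, hx.2 i hi⟩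

lemma isClosed_stdSimp (N : ℕ) : IsClosed (stdSimp N) := by
  simp only [stdSimp, Set.ofPred_and, Set.ofPred_forall]
  exact (isClosed_iInter fun i => isClosed_le continuous_const (by fun_prop)).inter
    (isClosed_eq (by fun_prop) continuous_const)

lemma exists_continuous_eqOn_stdSimp {d : ℕ}
    {f : EuclideanSpace ℝ (Fin (N + 1)) → EuclideanSpace ℝ (Fin d)}
    (hf : ContinuousOn f (stdSimp N)) :
    ∃ g : EuclideanSpace ℝ (Fin (N + 1)) → EuclideanSpace ℝ (Fin d), Continuous g ∧
      Set.EqOn g f (stdSimp N) := by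
  have : TietzeExtension.{0, 0} (EuclideanSpace ℝ (Fin d)) := TietzeExtension.of_tvs ℝ
  obtain ⟨g, hg⟩ := ContinuousMap.exists_restrict_eq (isClosed_stdSimp N)
    ⟨(stdSimp N).domRestrict f, hf.domRestrict⟩
  exact ⟨g, g.continuous, fun x hx => congrArg (fun φ => φ ⟨x, hx⟩) hg⟩

end Faces

section Transversal

variable {m d p : ℕ} [Fact p.Prime]

lemma exists_eulerDegree_mul_add_eq (hmd : m ≤ d) (heven : Even (p * (d - m))) :
    ∃ s, eulerDegree p * s + m = d := by
  by_cases hp : p = 2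
  · exact ⟨d - m, by rw [eulerDegree, if_pos hp]; omega⟩
  · have hodd : ¬Even p := fun h => hp ((Fact.out : p.Prime).even_iff.1 h)
    obtain ⟨s, hs⟩ := (Nat.even_mul.1 heven).resolve_left hodd
    exact ⟨s, by rw [eulerDegree, if_neg hp]; omega⟩

theorem exists_disjointPoints_affineSubspace {T : Type*} [Fintype T] (hmd : m ≤ d)
    (heven : Even (p * (d - m)) ∨ m = 0) {e n : Fin (m + 1) → ℕ}
    (hn : ∀ ℓ, (p ^ e ℓ - 1) * (d - m + Fintype.card T) < n ℓ)
    {τ : ∀ ℓ, T → (Fin (n ℓ) → ℝ) → ℝ} (hτ : ∀ ℓ c, Continuous (τ ℓ c))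
    {F : ∀ ℓ, (Fin (n ℓ) → ℝ) → EuclideanSpace ℝ (Fin d)} (hF : ∀ ℓ, Continuous (F ℓ)) :
    ∃ Λ : ∀ ℓ, DisjointPoints (Fin (e ℓ) → ZMod p) (n ℓ),
      (∀ ℓ c g g', τ ℓ c ((Λ ℓ).point g) = τ ℓ c ((Λ ℓ).point g')) ∧
      ∃ L : AffineSubspace ℝ (EuclideanSpace ℝ (Fin d)),
        (L : Set (EuclideanSpace ℝ (Fin d))).Nonempty ∧ Module.finrank ℝ L.direction = m ∧
        ∀ ℓ g, F ℓ ((Λ ℓ).point g) ∈ L := by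
  have hcoord (ℓ) (h : Fin d) : Continuous fun x => F ℓ x h := by fun_prop
  obtain heven | rfl := heven
  · obtain ⟨s, hs⟩ := exists_eulerDegree_mul_add_eq hmd heven
    obtain ⟨Λ, W, hΛ, hW⟩ := exists_disjointPoints_normalFrame (d := d)
      (fun ℓ => by rw [← Nat.eq_sub_of_add_eq hs] at hn; exact hn ℓ) (by omega) hτ hcoord
    have : Nonempty (Σ ℓ, Fin (e ℓ) → ZMod p) := ⟨⟨0, 0⟩⟩
    obtain ⟨L, hL, hLm, hmem⟩ := W.exists_affineSubspace hs
      (P := fun x : Σ ℓ, Fin (e ℓ) → ZMod p => F x.1 ((Λ x.1).point x.2))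
      fun i x y => hW i x.1 x.2 y.1 y.2
    exact ⟨Λ, hΛ, L, hL, hLm, fun ℓ g => hmem ⟨ℓ, g⟩⟩
  · obtain ⟨Λ, -, hΛ, -⟩ := exists_disjointPoints_normalFrame (s := 0) (T := T ⊕ Fin d)
      (τ := fun ℓ => Sum.elim (τ ℓ) fun h x => F ℓ x h)
      (fun ℓ => by simpa [add_comm] using hn ℓ) (by simp) (by
        rintro ℓ (c | h)
        exacts [hτ ℓ c, hcoord ℓ h]) hcoord
    refine ⟨Λ, fun ℓ c => hΛ ℓ (.inl c), affineSpan ℝ {F 0 ((Λ 0).point 0)},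
      ⟨_, mem_affineSpan ℝ rfl⟩, by simp [direction_affineSpan], fun ℓ g => ?_⟩
    obtain rfl := Subsingleton.elim (α := Fin 1) 0 ℓ
    rw [AffineSubspace.mem_affineSpan_singleton]
    ext h
    exact hΛ 0 (.inr h) g 0

lemma pred_mul_add_one_lt {r c d : ℕ} (hr : 0 < r) (hc : c ≤ d + 2) :
    (r - 1) * c + 1 < r * (⌈((r : ℚ) - 1) / r * d⌉₊ + 2) := by
  have hceil := Nat.le_ceil (((r : ℚ) - 1) / r * d)
  generalize ⌈((r : ℚ) - 1) / r * d⌉₊ = k at hceil ⊢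
  obtain ⟨q, rfl⟩ := Nat.exists_eq_add_one.2 hr
  rw [div_mul_eq_mul_div, div_le_iff₀ (by positivity), Nat.cast_succ, add_sub_cancel_right] at hceil
  norm_cast at hceil
  rw [Nat.add_sub_cancel]
  linarith [Nat.mul_le_mul_left q hc]

end Transversal

end VanKampenFlores

open VanKampenFlores

/-- The topological generalized transversal Van Kampen–Flores theorem. -/
theorem topological_generalized_transversal_vanKampenFlores
    (m d p : ℕ) (hp : p.Prime) (hmd : m < d)
    (e : Fin (m + 1) → ℕ)
    (heven : Even (p * (d - m)) ∨ m = 0)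
    (N : Fin (m + 1) → ℕ) (hN : ∀ ℓ, N ℓ = (p ^ e ℓ - 1) * (d + 2 - m))
    (k : Fin (m + 1) → ℕ)
    (hk : ∀ ℓ, k ℓ = ⌈(((p ^ e ℓ : ℚ) - 1) / (p ^ e ℓ : ℚ)) * d⌉₊)
    (f : ∀ ℓ : Fin (m + 1), EuclideanSpace ℝ (Fin (N ℓ + 1)) → EuclideanSpace ℝ (Fin d))
    (hf : ∀ ℓ, ContinuousOn (f ℓ) (stdSimp (N ℓ))) :
    ∃ L : AffineSubspace ℝ (EuclideanSpace ℝ (Fin d)),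
      (L : Set (EuclideanSpace ℝ (Fin d))).Nonempty ∧
      Module.finrank ℝ L.direction = m ∧
      ∀ ℓ : Fin (m + 1), ∃ σ : Fin (p ^ e ℓ) → Finset (Fin (N ℓ + 1)),
        (∀ j, (σ j).Nonempty) ∧
        (∀ j j', j ≠ j' → Disjoint (σ j) (σ j')) ∧
        (∀ j, (σ j).card ≤ k ℓ + 1) ∧
        (∀ j, (f ℓ '' simpFace (N ℓ) (σ j) ∩ (L : Set (EuclideanSpace ℝ (Fin d)))).Nonempty) := by
  have : Fact p.Prime := ⟨hp⟩
  choose f' hf' hff' using fun ℓ => exists_continuous_eqOn_stdSimp (hf ℓ)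
  obtain ⟨Λ, hΛ, L, hL, hLm, hmem⟩ := exists_disjointPoints_affineSubspace hmd.le heven
    (T := Bool) (n := fun ℓ => N ℓ + 1)
    (τ := fun ℓ b x => bif b then ∑ P, x P else (MvPolynomial.esymm _ ℝ (k ℓ + 2)).eval x)
    (F := fun ℓ x => f' ℓ (WithLp.toLp 2 ((Fintype.card (Fin (e ℓ) → ZMod p) : ℝ) • x)))
    (fun ℓ => by rw [hN ℓ, Fintype.card_bool, Nat.sub_add_comm hmd.le]; exact Nat.lt_succ_self _)
    (by
      rintro ℓ (_ | _)
      exacts [MvPolynomial.continuous_eval _, continuous_finsetSum _ fun P _ => continuous_apply P])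
    (fun ℓ => by fun_prop)
  refine ⟨L, hL, hLm, fun ℓ => ?_⟩
  have hcard : Fintype.card (Fin (e ℓ) → ZMod p) = p ^ e ℓ := by simp
  have hbound : N ℓ + 1 < Fintype.card (Fin (e ℓ) → ZMod p) * (k ℓ + 2) := by
    rw [hcard, hN ℓ, hk ℓ, ← Nat.cast_pow]
    exact pred_mul_add_one_lt (pow_pos hp.pos (e ℓ)) (Nat.sub_le _ _)
  have hface := (Λ ℓ).card_smul_mem_simpFace (hΛ ℓ true)
  let E := (Fintype.equivFinOfCardEq hcard).symm
  exact ⟨fun j => (Λ ℓ).face (E j), fun j => nonempty_of_mem_simpFace (hface _),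
    fun j j' hj => (Λ ℓ).disjoint_face (E.injective.ne hj),
    fun j => Nat.lt_succ_iff.1 ((Λ ℓ).card_face_lt hbound (hΛ ℓ false) _),
    fun j => ⟨_, ⟨_, hface (E j), (hff' ℓ (hface _).1).symm⟩, hmem ℓ (E j)⟩⟩
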